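/- arXiv:0811.4230 — 8 statements merged into one kernel-verified Lean document; each statement's English description precedes it below -/
import Mathlib

section
/- Let (X,T) be a topological dynamical system and let {B_n}_{n∈ℕ} be a sequence of non-empty compact subsets of X converging in the Hausdorff metric to the singleton {x_0}, and suppose that for every ε > 0 there exist J ∈ ℕ and N ∈ ℕ such that diam(T^j B_n) < ε whenever j ≥ J and n ≥ N. Let x_n ∈ B_n for each n ∈ ℕ. Then h(T, ⋃_{n=1}^∞ B_n ∪ {x_0}) = max{ sup_{n∈ℕ} h(T,B_n), h(T, {x_0, x_1, x_2, …}) }. If in addition x_0 ∉ B_n for every n ∈ ℕ, then every countable compact subset of ⋃_{n=1}^∞ B_n ∪ {x_0} whose unique limit point is x_0 has topological entropy at most h(T, {x_0, x_1, x_2, …}). -/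
open Filter Set Metric MeasureTheory
open scoped ENNReal Topology

noncomputable section

variable {X Y : Type*}

def IsSep [PseudoMetricSpace X] (T : X → X) (n : ℕ) (ε : ℝ) (E : Set X) : Prop :=
  E.Pairwise fun x y => ∃ i < n, ε < dist (T^[i] x) (T^[i] y)

def sepMaxCard [PseudoMetricSpace X] (T : X → X) (n : ℕ) (ε : ℝ) (K : Set X) : ℝ≥0∞ :=
  ⨆ (E : Finset X) (_ : ↑E ⊆ K ∧ IsSep T n ε (↑E : Set X)), (E.card : ℝ≥0∞)

def sepEnt [PseudoMetricSpace X] (T : X → X) (ε : ℝ) (K : Set X) : EReal :=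
  Filter.atTop.limsup fun n : ℕ => ENNReal.log (sepMaxCard T n ε K) / (n : EReal)

def subEnt [PseudoMetricSpace X] (T : X → X) (K : Set X) : EReal :=
  ⨆ (ε : ℝ) (_ : 0 < ε), sepEnt T ε K

/-- `(X,T)` is lowerable. -/
def Lowerable [PseudoMetricSpace X] (T : X → X) : Prop :=
  ∀ h : EReal, 0 ≤ h → h ≤ subEnt T (univ : Set X) →
    ∃ K : Set X, K.Nonempty ∧ IsCompact K ∧ subEnt T K = h

/-- `(X,T)` is hereditarily lowerable. -/
def HerLowerable [PseudoMetricSpace X] (T : X → X) : Prop :=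
  ∀ K : Set X, K.Nonempty → IsCompact K → ∀ h : EReal, 0 ≤ h → h ≤ subEnt T K →
    ∃ K' : Set X, K' ⊆ K ∧ K'.Nonempty ∧ IsCompact K' ∧ subEnt T K' = h

/-- `(X,T)` is hereditarily uniformly lowerable: the lowering subset can moreover be chosen
with at most one limit (accumulation) point. -/
def HUL [PseudoMetricSpace X] (T : X → X) : Prop :=
  ∀ K : Set X, K.Nonempty → IsCompact K → ∀ h : EReal, 0 ≤ h → h ≤ subEnt T K →
    ∃ K' : Set X, K' ⊆ K ∧ K'.Nonempty ∧ IsCompact K' ∧ subEnt T K' = h ∧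
      {x | AccPt x (𝓟 K')}.Subsingleton

/-- `Φ_ε(x) = {y : d(T^n x, T^n y) ≤ ε for all n ≥ 0}`. -/
def Phi [PseudoMetricSpace X] (T : X → X) (ε : ℝ) (x : X) : Set X :=
  {y | ∀ n : ℕ, dist (T^[n] x) (T^[n] y) ≤ ε}

/-- `h*_T(ε) = sup_x h(T, Φ_ε(x))`. -/
def hStar [PseudoMetricSpace X] (T : X → X) (ε : ℝ) : EReal :=
  ⨆ x : X, subEnt T (Phi T ε x)

/-- `(X,T)` is asymptotically `h`-expansive: `h*_T(ε) → 0` as `ε → 0+`. -/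
def AsympHExpansive [PseudoMetricSpace X] (T : X → X) : Prop :=
  Tendsto (fun ε : ℝ => hStar T ε) (𝓝[>] 0) (𝓝 (0 : EReal))

/-- `T^n` for `n : ℤ`, for a homeomorphism `T`. -/
def iterZ [TopologicalSpace X] (T : X ≃ₜ X) : ℤ → X → X
  | Int.ofNat n => (⇑T)^[n]
  | Int.negSucc n => (⇑T.symm)^[n + 1]

/-- `T` is expansive with expansive constant `δ`. -/
def ExpansiveWith [MetricSpace X] (T : X ≃ₜ X) (δ : ℝ) : Prop :=
  ∀ x y : X, x ≠ y → ∃ n : ℤ, δ < dist (iterZ T n x) (iterZ T n y)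

/-- `K ⪰ 𝒲` : `K` is contained in some member of the family `𝒲`. -/
def Refines (K : Set X) (W : Finset (Set X)) : Prop := ∃ A ∈ W, K ⊆ A

/-- The join `U ∨ V` of two finite covers. -/
def covJoin (U V : Finset (Set X)) : Finset (Set X) :=
  letI := Classical.decEq (Set X)
  (U ×ˢ V).image fun p => p.1 ∩ p.2

/-- `dynCov T U n = U_0^{n-1} = ⋁_{i=0}^{n-1} T^{-i} U` (with `U_0^{-1} = {univ}`). -/
def dynCov (T : X → X) (U : Finset (Set X)) : ℕ → Finset (Set X)
  | 0 => {(univ : Set X)}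
  | n + 1 =>
      letI := Classical.decEq (Set X)
      covJoin (dynCov T U n) (U.image fun A => T^[n] ⁻¹' A)

/-- `n_{T,U}(K)`: `0` if `K ⋠ U`; `+∞` if `T^i K ⪰ U` for all `i`; otherwise the largest `j`
with `T^i K ⪰ U` for all `0 ≤ i ≤ j-1`. -/
def nTU (T : X → X) (U : Finset (Set X)) (K : Set X) : ℕ∞ :=
  ⨆ (j : ℕ) (_ : ∀ i < j, Refines (T^[i] '' K) U), (j : ℕ∞)

/-- `e^{-λ n}` for `n : ℕ∞`, valued in `ℝ≥0∞` (with the conventions `e^{-λ·∞} = 0` for `λ > 0`,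
`= 1` for `λ = 0` and `= ∞` for `λ < 0`). -/
def expWeight (lam : ℝ) (n : ℕ∞) : ℝ≥0∞ :=
  if n = ⊤ then (if 0 < lam then 0 else if lam = 0 then 1 else ⊤)
  else ENNReal.ofReal (Real.exp (-(lam * (n.toNat : ℝ))))

/-- `m_{T,U}(K,λ,k)`: the infimum of `∑_{E ∈ 𝓔} e^{-λ n_{T,U}(E)}` over all countable families
`𝓔` of subsets of `X` with `∪𝓔 ⊇ K` and `E ⪰ U_0^{k-1}` for every `E ∈ 𝓔`. -/
def mTU (T : X → X) (U : Finset (Set X)) (K : Set X) (lam : ℝ) (k : ℕ) : ℝ≥0∞ :=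
  ⨅ (ℰ : Set (Set X)) (_ : ℰ.Countable ∧ K ⊆ ⋃₀ ℰ ∧ ∀ E ∈ ℰ, Refines E (dynCov T U k)),
    ∑' E : ℰ, expWeight lam (nTU T U (E : Set X))

/-- `m_{T,U}(K,λ) = lim_{k→∞} m_{T,U}(K,λ,k)`; since `m_{T,U}(K,λ,k)` is nondecreasing in `k`,
the limit is the supremum. -/
def mTUlim (T : X → X) (U : Finset (Set X)) (K : Set X) (lam : ℝ) : ℝ≥0∞ :=
  ⨆ k : ℕ, mTU T U K lam k

/-- `h^B_U(T,K) = inf {λ : m_{T,U}(K,λ) = 0}`. -/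
def hBU (T : X → X) (U : Finset (Set X)) (K : Set X) : EReal :=
  ⨅ (lam : ℝ) (_ : mTUlim T U K lam = 0), (lam : EReal)

/-- The dimensional entropy `h^B(T,K) = sup_U h^B_U(T,K)`, supremum over finite open covers. -/
def hB [TopologicalSpace X] (T : X → X) (K : Set X) : EReal :=
  ⨆ (U : Finset (Set X)) (_ : (∀ A ∈ U, IsOpen A) ∧ ⋃₀ (↑U : Set (Set X)) = univ),
    hBU T U K

/-- `N(U,K)`: the minimal cardinality of a subfamily of `U` covering `K` (`0` for `K = ∅`,
`∞` if no subfamily covers `K`). -/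
def covCard (U : Finset (Set X)) (K : Set X) : ℝ≥0∞ :=
  ⨅ (V : Finset (Set X)) (_ : V ⊆ U ∧ K ⊆ ⋃₀ (↑V : Set (Set X))), (V.card : ℝ≥0∞)

/-- `h_U(T,K) = limsup_{n→∞} (1/n) log N(U_0^{n-1},K)`. -/
def hCov (T : X → X) (U : Finset (Set X)) (K : Set X) : EReal :=
  Filter.atTop.limsup fun n : ℕ => ENNReal.log (covCard (dynCov T U n) K) / (n : EReal)

/-- Topological entropy of a subset via open covers: `h(T,K) = sup_U h_U(T,K)`. -/
def hCovSup [TopologicalSpace X] (T : X → X) (K : Set X) : EReal :=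
  ⨆ (U : Finset (Set X)) (_ : (∀ A ∈ U, IsOpen A) ∧ ⋃₀ (↑U : Set (Set X)) = univ),
    hCov T U K

/-- The atom of the (finite) partition `P` containing `x`. -/
def atomAt (P : Finset (Set X)) (x : X) : Set X := ⋃₀ {A | A ∈ P ∧ x ∈ A}

/-- `P` is a finite Borel partition. -/
def IsFinPartition [MeasurableSpace X] (P : Finset (Set X)) : Prop :=
  (∀ A ∈ P, MeasurableSet A) ∧ ⋃₀ (↑P : Set (Set X)) = univ ∧
    (↑P : Set (Set X)).Pairwise fun A B => Disjoint A B

/-- The Shannon entropy `H_μ(P) = ∑_{A ∈ P} -μ(A) log μ(A)` of a finite partition. -/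
def partEnt [MeasurableSpace X] (μ : Measure X) (P : Finset (Set X)) : ℝ :=
  ∑ A ∈ P, -((μ A).toReal * Real.log (μ A).toReal)

/-- The measure-theoretic (Kolmogorov–Sinai) entropy `h_μ(T)`: the supremum over finite Borel
partitions `P` of `lim_n (1/n) H_μ(P_0^{n-1})`; by subadditivity this limit is the infimum. -/
def ksEntropy [MeasurableSpace X] (T : X → X) (μ : Measure X) : EReal :=
  ⨆ (P : Finset (Set X)) (_ : IsFinPartition P),
    ⨅ n : ℕ, ((partEnt μ (dynCov T P (n + 1)) / (n + 1) : ℝ) : EReal)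

/-- `π` is a principal factor map from `(X,T)` to `(Y,S)` : `h_μ(T) = h_{πμ}(S)` for every
`T`-invariant Borel probability measure `μ`. -/
def IsPrincipal [MeasurableSpace X] [MeasurableSpace Y] (T : X → X) (S : Y → Y)
    (π : X → Y) : Prop :=
  ∀ μ : Measure X, IsProbabilityMeasure μ → Measure.map T μ = μ →
    ksEntropy T μ = ksEntropy S (Measure.map π μ)

/-- The relative topological entropy `h_top(T,X|π) = sup_{y ∈ Y} h(T, π^{-1}(y))`. -/
def relEnt [PseudoMetricSpace X] (T : X → X) (π : X → Y) : EReal :=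
  ⨆ y : Y, subEnt T (π ⁻¹' {y})

/-- The canonical conversion `EReal → ℝ≥0∞` (`⊥` and negative reals go to `0`). -/
def erealToENNReal (x : EReal) : ℝ≥0∞ := if x = ⊤ then ⊤ else ENNReal.ofReal x.toReal


lemma aux_mono_set [PseudoMetricSpace X] (T : X → X) (n : ℕ) (ε : ℝ) {K L : Set X} (h : K ⊆ L) :
    sepMaxCard T n ε K ≤ sepMaxCard T n ε L := by
  unfold sepMaxCard
  refine iSup₂_le fun E hE => ?_
  exact le_iSup₂_of_le E ⟨hE.1.trans h, hE.2⟩ le_rfl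

lemma aux_sepEnt_eq [PseudoMetricSpace X] (T : X → X) (ε : ℝ) (K : Set X) :
    sepEnt T ε K = ExpGrowth.expGrowthSup fun n => sepMaxCard T n ε K := rfl

lemma aux_sepEnt_mono [PseudoMetricSpace X] (T : X → X) (ε : ℝ) {K L : Set X} (h : K ⊆ L) :
    sepEnt T ε K ≤ sepEnt T ε L := by
  rw [aux_sepEnt_eq, aux_sepEnt_eq]
  exact ExpGrowth.expGrowthSup_monotone fun n => aux_mono_set T n ε h

lemma aux_subEnt_mono [PseudoMetricSpace X] (T : X → X) {K L : Set X} (h : K ⊆ L) :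
    subEnt T K ≤ subEnt T L :=
  iSup₂_mono fun ε _ => aux_sepEnt_mono T ε h

lemma aux_le_subEnt [PseudoMetricSpace X] (T : X → X) (K : Set X) {ε : ℝ} (h : 0 < ε) :
    sepEnt T ε K ≤ subEnt T K :=
  le_iSup₂_of_le (f := fun (ε : ℝ) (_ : 0 < ε) => sepEnt T ε K) ε h le_rfl

lemma aux_union [PseudoMetricSpace X] (T : X → X) (n : ℕ) (ε : ℝ) (K L : Set X) :
    sepMaxCard T n ε (K ∪ L) ≤ sepMaxCard T n ε K + sepMaxCard T n ε L := by
  classical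
  conv_lhs => unfold sepMaxCard
  refine iSup₂_le fun E hE => ?_
  have h1 : ((E.filter (· ∈ K)).card : ℝ≥0∞) ≤ sepMaxCard T n ε K := by
    unfold sepMaxCard
    refine le_iSup₂_of_le (E.filter (· ∈ K)) ⟨?_, ?_⟩ le_rfl
    · intro y hy
      simp at hy
      exact hy.2
    · exact hE.2.mono (Finset.coe_subset.2 (Finset.filter_subset _ _))
  have h2 : ((E.filter (· ∉ K)).card : ℝ≥0∞) ≤ sepMaxCard T n ε L := by
    unfold sepMaxCard
    refine le_iSup₂_of_le (E.filter (· ∉ K)) ⟨?_, ?_⟩ le_rfl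
    · intro y hy
      simp at hy
      exact (hE.1 (Finset.mem_coe.2 hy.1)).resolve_left hy.2
    · exact hE.2.mono (Finset.coe_subset.2 (Finset.filter_subset _ _))
  have h3 := Finset.card_filter_add_card_filter_not (s := E) (· ∈ K)
  rw [← h3]
  push_cast
  exact add_le_add h1 h2

lemma aux_sepEnt_union [PseudoMetricSpace X] (T : X → X) (ε : ℝ) (K L : Set X) :
    sepEnt T ε (K ∪ L) ≤ max (sepEnt T ε K) (sepEnt T ε L) := by
  rw [aux_sepEnt_eq, aux_sepEnt_eq, aux_sepEnt_eq, ← ExpGrowth.expGrowthSup_add]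
  exact ExpGrowth.expGrowthSup_monotone fun n => aux_union T n ε K L

lemma aux_shadow [PseudoMetricSpace X] (T : X → X) (n : ℕ) (ε : ℝ) (L S : Set X)
    (h : ∀ y ∈ L, ∃ z ∈ S, ∀ j, dist (T^[j] y) (T^[j] z) < ε / 3) :
    sepMaxCard T n ε L ≤ sepMaxCard T n (ε / 3) S := by
  classical
  choose! f hfS hf using h
  conv_lhs => unfold sepMaxCard
  refine iSup₂_le fun E hE => ?_
  have key : ∀ y ∈ E, ∀ z ∈ E, y ≠ z →
      ∃ i < n, ε / 3 < dist (T^[i] (f y)) (T^[i] (f z)) := by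
    intro y hy z hz hne
    obtain ⟨i, hi, hd⟩ := hE.2 hy hz hne
    refine ⟨i, hi, ?_⟩
    have h1 := hf y (hE.1 hy) i
    have h2 := hf z (hE.1 hz) i
    have h3 := dist_triangle4 (T^[i] y) (T^[i] (f y)) (T^[i] (f z)) (T^[i] z)
    rw [dist_comm (T^[i] (f z))] at h3
    linarith
  have hinj : Set.InjOn f E := by
    intro y hy z hz hyz
    by_contra hne
    obtain ⟨i, hi, hd⟩ := key y hy z hz hne
    rw [hyz, dist_self] at hd
    have h1 := hf y (hE.1 hy) i
    have := dist_nonneg (x := T^[i] y) (y := T^[i] (f y))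
    linarith
  rw [← Finset.card_image_of_injOn hinj]
  unfold sepMaxCard
  refine le_iSup₂_of_le (E.image f) ⟨?_, ?_⟩ le_rfl
  · intro w hw
    simp only [Finset.coe_image, Set.mem_image, Finset.mem_coe] at hw
    obtain ⟨y, hy, rfl⟩ := hw
    exact hfS y (hE.1 hy)
  · intro w hw v hv hne
    simp only [Finset.coe_image, Set.mem_image, Finset.mem_coe] at hw hv
    obtain ⟨y, hy, rfl⟩ := hw
    obtain ⟨z, hz, rfl⟩ := hv
    exact key y hy z hz (fun h => hne (by rw [h]))

lemma aux_finite [PseudoMetricSpace X] (T : X → X) (ε : ℝ) {K : Set X} (hK : K.Finite) :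
    sepEnt T ε K ≤ 0 := by
  rw [aux_sepEnt_eq, ← ExpGrowth.expGrowthSup_const (b := (hK.toFinset.card + 1 : ℕ))
    (by simp) (ENNReal.natCast_ne_top _)]
  refine ExpGrowth.expGrowthSup_monotone fun n => ?_
  unfold sepMaxCard
  refine iSup₂_le fun E hE => ?_
  have : E ⊆ hK.toFinset := fun y hy => by simpa using hE.1 hy
  exact_mod_cast (Finset.card_le_card this).trans (Nat.le_succ _)

lemma aux_nonneg [PseudoMetricSpace X] (T : X → X) (ε : ℝ) {K : Set X} (hK : K.Nonempty) :
    0 ≤ sepEnt T ε K := by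
  obtain ⟨y, hy⟩ := hK
  rw [aux_sepEnt_eq, ← ExpGrowth.expGrowthSup_const (b := 1) one_ne_zero ENNReal.one_ne_top]
  refine ExpGrowth.expGrowthSup_monotone fun n => ?_
  unfold sepMaxCard
  refine le_iSup₂_of_le {y} ⟨by simpa using hy, by simp [IsSep]⟩ (by simp)

lemma aux_tail {X : Type*} [MetricSpace X] [CompactSpace X] (T : X ≃ₜ X)
    (B : ℕ → Set X) (hBne : ∀ n, (B n).Nonempty) (x₀ : X)
    (hconv : Tendsto (fun n => hausdorffDist (B n) {x₀}) atTop (𝓝 0))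
    (hdiam : ∀ ε : ℝ, 0 < ε → ∃ J N : ℕ, ∀ j ≥ J, ∀ n ≥ N, diam ((⇑T)^[j] '' B n) < ε)
    (ε : ℝ) (hε : 0 < ε) :
    ∃ N : ℕ, ∀ n ≥ N, ∀ y ∈ B n, ∀ z ∈ B n, ∀ j, dist (T^[j] y) (T^[j] z) < ε := by
  obtain ⟨J, N, hJN⟩ := hdiam ε hε
  have h1 : ∀ᶠ n in atTop, ∀ j ∈ Finset.range J, ∀ y ∈ B n,
      dist (T^[j] y) (T^[j] x₀) < ε / 2 := by
    rw [Filter.eventually_all_finset]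
    intro j _
    have hc : Continuous (T^[j]) := T.continuous.iterate j
    obtain ⟨δ, hδ, hδ2⟩ := Metric.continuous_iff.1 hc x₀ (ε / 2) (by positivity)
    filter_upwards [hconv.eventually_lt_const hδ] with n hn y hy
    apply hδ2
    rw [← infDist_singleton]
    refine (infDist_le_hausdorffDist_of_mem hy ?_).trans_lt hn
    exact hausdorffEDist_ne_top_of_nonempty_of_bounded (hBne n) (singleton_nonempty _)
      isBounded_of_compactSpace isBounded_of_compactSpace
  obtain ⟨N', hN'⟩ := eventually_atTop.1 h1
  refine ⟨max N N', fun n hn y hy z hz j => ?_⟩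
  rcases lt_or_ge j J with hj | hj
  · have a := hN' n (le_of_max_le_right hn) j (Finset.mem_range.2 hj)
    have b := dist_triangle_right (T^[j] y) (T^[j] z) (T^[j] x₀)
    linarith [a y hy, a z hz]
  · exact (dist_le_diam_of_mem isBounded_of_compactSpace (mem_image_of_mem _ hy)
      (mem_image_of_mem _ hz)).trans_lt (hJN j hj n (le_of_max_le_left hn))

lemma aux_main {X : Type*} [MetricSpace X] [CompactSpace X] (T : X ≃ₜ X)
    (B : ℕ → Set X) (hBne : ∀ n, (B n).Nonempty) (x₀ : X)
    (hconv : Tendsto (fun n => hausdorffDist (B n) {x₀}) atTop (𝓝 0))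
    (hdiam : ∀ ε : ℝ, 0 < ε → ∃ J N : ℕ, ∀ j ≥ J, ∀ n ≥ N, diam ((⇑T)^[j] '' B n) < ε)
    (x : ℕ → X) (hx : ∀ n, x n ∈ B n) (K : Set X) (hK : K ⊆ (⋃ n, B n) ∪ {x₀})
    (c : EReal) (hc : ∀ ε > 0, ∀ n, sepEnt (⇑T) ε (K ∩ B n) ≤ c)
    (hc' : subEnt (⇑T) (insert x₀ (range x)) ≤ c) : subEnt (⇑T) K ≤ c := by
  refine iSup₂_le fun ε hε => ?_
  obtain ⟨N, hN⟩ := aux_tail T B hBne x₀ hconv hdiam (ε / 3) (by positivity)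
  let L : Set X := {y | y = x₀ ∨ ∃ n ≥ N, y ∈ B n}
  have hL : sepEnt T ε L ≤ c := by
    refine le_trans ?_ ((aux_le_subEnt T _ (show 0 < ε / 3 by positivity)).trans hc')
    rw [aux_sepEnt_eq, aux_sepEnt_eq]
    refine ExpGrowth.expGrowthSup_monotone fun n => aux_shadow _ _ _ _ _ ?_
    rintro y (rfl | ⟨m, hm, hy⟩)
    · exact ⟨y, mem_insert _ _, fun j => by rw [dist_self]; positivity⟩
    · exact ⟨x m, mem_insert_of_mem _ (mem_range_self m), hN m hm y hy _ (hx m)⟩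
  have hind : ∀ k : ℕ, sepEnt T ε ({y | ∃ m < k, y ∈ K ∩ B m} ∪ L) ≤ c := by
    intro k
    induction k with
    | zero => simpa using hL
    | succ k ih =>
      refine (aux_sepEnt_mono T ε ?_).trans
        ((aux_sepEnt_union T ε (K ∩ B k) _).trans (max_le (hc ε hε k) ih))
      rintro y (⟨m, hm, hy⟩ | hy)
      · rcases Nat.lt_succ_iff_lt_or_eq.1 hm with h | rfl
        · exact Or.inr (Or.inl ⟨m, h, hy⟩)
        · exact Or.inl hy
      · exact Or.inr (Or.inr hy)
  refine (aux_sepEnt_mono T ε ?_).trans (hind N)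
  intro y hy
  rcases hK hy with h | h
  · obtain ⟨m, hm⟩ := mem_iUnion.1 h
    rcases lt_or_ge m N with h' | h'
    · exact Or.inl ⟨m, h', hy, hm⟩
    · exact Or.inr (Or.inr ⟨m, h', hm⟩)
  · exact Or.inr (Or.inl h)

/-- Entropy of a union of compacta shrinking to a point: if `B n → {x₀}` in
the Hausdorff metric and the forward images `T^j B_n` have uniformly small diameters
(eventually in `j` and `n`), then for any choice `x n ∈ B n`,
`h(T, ⋃ₙ Bₙ ∪ {x₀}) = max (supₙ h(T,Bₙ)) (h(T,{x₀,x₁,x₂,…}))`; and if moreover `x₀ ∉ Bₙ`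
for all `n`, then any countable compact subset of `⋃ₙ Bₙ ∪ {x₀}` whose unique limit point
is `x₀` has entropy at most `h(T,{x₀,x₁,x₂,…})`. -/
theorem entropy_of_union_shrinking {X : Type*} [MetricSpace X] [CompactSpace X] (T : X ≃ₜ X)
    (B : ℕ → Set X) (hBne : ∀ n, (B n).Nonempty) (hBc : ∀ n, IsCompact (B n)) (x₀ : X)
    (hconv : Tendsto (fun n => hausdorffDist (B n) {x₀}) atTop (𝓝 0))
    (hdiam : ∀ ε : ℝ, 0 < ε → ∃ J N : ℕ, ∀ j ≥ J, ∀ n ≥ N, diam ((⇑T)^[j] '' B n) < ε)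
    (x : ℕ → X) (hx : ∀ n, x n ∈ B n) :
    subEnt (⇑T) ((⋃ n, B n) ∪ {x₀}) =
      max (⨆ n, subEnt (⇑T) (B n)) (subEnt (⇑T) (insert x₀ (range x))) ∧
    ((∀ n, x₀ ∉ B n) → ∀ C : Set X, C ⊆ (⋃ n, B n) ∪ {x₀} → C.Countable → IsCompact C →
      {y | AccPt y (𝓟 C)} = {x₀} →
        subEnt (⇑T) C ≤ subEnt (⇑T) (insert x₀ (range x))) := by
  constructor
  · apply le_antisymm
    · refine aux_main T B hBne x₀ hconv hdiam x hx _ subset_rfl _ (fun ε hε n => ?_)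
        (le_max_right _ _)
      refine le_trans ?_ (le_max_left _ _)
      refine le_trans ?_ (le_iSup _ n)
      exact (aux_sepEnt_mono T ε inter_subset_right).trans (aux_le_subEnt _ _ hε)
    · refine max_le (iSup_le fun n => aux_subEnt_mono T ?_) (aux_subEnt_mono T ?_)
      · exact (subset_iUnion B n).trans subset_union_left
      · rintro y (rfl | ⟨n, rfl⟩)
        · exact Or.inr rfl
        · exact Or.inl (mem_iUnion.2 ⟨n, hx n⟩)
  · intro hx0 C hC _ hCc hacc
    refine aux_main T B hBne x₀ hconv hdiam x hx C hC _ (fun ε hε n => ?_) le_rfl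
    have hfin : (C ∩ B n).Finite := by
      by_contra hinf
      obtain ⟨y, hy, hya⟩ := Set.Infinite.exists_accPt_of_subset_isCompact hinf (hBc n)
        inter_subset_right
      have : y ∈ {y | AccPt y (𝓟 C)} := hya.mono (principal_mono.2 inter_subset_left)
      rw [hacc] at this
      exact hx0 n (this ▸ hy)
    exact (aux_finite _ _ hfin).trans ((aux_nonneg _ 1 (insert_nonempty _ _)).trans
      (aux_le_subEnt _ _ one_pos))
end
end

section
/- Let (X,T) be a topological dynamical system with metric d and let K ⊆ X be a compact subset with h(T,K) > 0. Then for every real h with 0 < h < h(T,K) there is δ_0 > 0 such that for every δ with 0 < δ ≤ δ_0 there exists a countable compact subset K_{h,δ} ⊆ K with a unique limit point such that s(d,T,δ,K_{h,δ}) = h. -/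
open Filter Set Metric MeasureTheory
open scoped ENNReal Topology

noncomputable section

variable {X Y : Type*}

section Helpers
variable {X : Type*} [MetricSpace X]
open ExpGrowth

lemma smc_mono (T : X → X) (n : ℕ) (δ : ℝ) {A B : Set X} (hAB : A ⊆ B) :
    sepMaxCard T n δ A ≤ sepMaxCard T n δ B := by
  refine iSup₂_le fun E hE => ?_
  exact le_iSup₂_of_le E ⟨hE.1.trans hAB, hE.2⟩ le_rfl

lemma smc_union (T : X → X) (n : ℕ) (δ : ℝ) (A B : Set X) :
    sepMaxCard T n δ (A ∪ B) ≤ sepMaxCard T n δ A + sepMaxCard T n δ B := by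
  classical
  refine iSup₂_le fun E hE => ?_
  have h1 : ((E.filter (· ∈ A)).card : ℝ≥0∞) ≤ sepMaxCard T n δ A := by
    refine le_iSup₂_of_le (E.filter (· ∈ A)) ⟨?_, ?_⟩ le_rfl
    · intro x hx
      simp at hx
      exact hx.2
    · exact hE.2.mono (Finset.coe_subset.2 (Finset.filter_subset _ _))
  have h2 : ((E.filter (¬ · ∈ A)).card : ℝ≥0∞) ≤ sepMaxCard T n δ B := by
    refine le_iSup₂_of_le (E.filter (¬ · ∈ A)) ⟨?_, ?_⟩ le_rfl
    · intro x hx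
      simp at hx
      exact (hE.1 hx.1).resolve_left hx.2
    · exact hE.2.mono (Finset.coe_subset.2 (Finset.filter_subset _ _))
  have h3 := E.card_filter_add_card_filter_not (p := (· ∈ A))
  rw [← h3]
  push_cast
  exact add_le_add h1 h2

lemma smc_le_one (T : X → X) (n : ℕ) (δ : ℝ) (A : Set X)
    (hA : ∀ x ∈ A, ∀ y ∈ A, ∀ i < n, dist (T^[i] x) (T^[i] y) ≤ δ) :
    sepMaxCard T n δ A ≤ 1 := by
  refine iSup₂_le fun E hE => ?_
  have : E.card ≤ 1 := by
    rw [Finset.card_le_one]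
    intro a ha b hb
    by_contra hab
    obtain ⟨i, hi, hd⟩ := hE.2 ha hb hab
    exact absurd (hA a (hE.1 ha) b (hE.1 hb) i hi) (not_le.2 hd)
  exact_mod_cast this

lemma smc_empty (T : X → X) (n : ℕ) (δ : ℝ) : sepMaxCard T n δ (∅ : Set X) = 0 := by
  refine le_antisymm (iSup₂_le fun E hE => ?_) bot_le
  have : E = ∅ := by
    have := subset_empty_iff.1 hE.1
    exact_mod_cast this
  simp [this]

lemma smc_singleton (T : X → X) (n : ℕ) (δ : ℝ) (hδ : 0 < δ) (a : X) :
    sepMaxCard T n δ {a} ≤ 1 := by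
  refine smc_le_one T n δ _ ?_
  rintro x rfl y rfl i _
  simp [hδ.le]

lemma smc_biUnion (T : X → X) (n : ℕ) (δ : ℝ) (F : ℕ → Set X) (B : ℝ≥0∞) (k : ℕ)
    (hF : ∀ j < k, sepMaxCard T n δ (F j) ≤ B) :
    sepMaxCard T n δ (⋃ j < k, F j) ≤ k * B := by
  induction k with
  | zero => simp [smc_empty]
  | succ k ih =>
    have : (⋃ j < k + 1, F j) = (⋃ j < k, F j) ∪ F k := by
      rw [Set.biUnion_lt_succ]
    rw [this]
    refine (smc_union ..).trans ?_
    push_cast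
    rw [add_mul, one_mul]
    exact add_le_add (ih fun j hj => hF j (by omega)) (hF k (by omega))

lemma sepEnt_eq (T : X → X) (δ : ℝ) (A : Set X) :
    sepEnt T δ A = expGrowthSup fun n => sepMaxCard T n δ A := rfl

lemma sepEnt_mono (T : X → X) (δ : ℝ) {A B : Set X} (hAB : A ⊆ B) :
    sepEnt T δ A ≤ sepEnt T δ B :=
  expGrowthSup_monotone fun n => smc_mono T n δ hAB

lemma sepEnt_anti (T : X → X) {δ δ' : ℝ} (hd : δ ≤ δ') (A : Set X) :
    sepEnt T δ' A ≤ sepEnt T δ A := by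
  refine expGrowthSup_monotone fun n => ?_
  refine iSup₂_le fun E hE => ?_
  refine le_iSup₂_of_le E ⟨hE.1, ?_⟩ le_rfl
  intro x hx y hy hxy
  obtain ⟨i, hi, h⟩ := hE.2 hx hy hxy
  exact ⟨i, hi, hd.trans_lt h⟩

lemma sepEnt_union (T : X → X) (δ : ℝ) (A B : Set X) :
    sepEnt T δ (A ∪ B) ≤ sepEnt T δ A ⊔ sepEnt T δ B := by
  rw [sepEnt_eq, sepEnt_eq, sepEnt_eq, ← expGrowthSup_add]
  exact expGrowthSup_monotone fun n => smc_union T n δ A B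

lemma sepEnt_empty (T : X → X) (δ : ℝ) : sepEnt T δ (∅ : Set X) = ⊥ := by
  rw [sepEnt_eq]
  simp only [smc_empty]
  exact expGrowthSup_zero

lemma sepEnt_finite (T : X → X) (δ : ℝ) {A : Set X} (hA : A.Finite) : sepEnt T δ A ≤ 0 := by
  have key : ∀ n, sepMaxCard T n δ A ≤ ((hA.toFinset.card + 1 : ℕ) : ℝ≥0∞) := by
    intro n
    refine iSup₂_le fun E hE => ?_
    have : E ⊆ hA.toFinset := fun x hx => by simpa using hE.1 hx
    have := Finset.card_le_card this
    exact_mod_cast this.trans (Nat.le_succ _)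
  rw [sepEnt_eq]
  refine (expGrowthSup_monotone key).trans ?_
  rw [expGrowthSup_const]
  · positivity
  · exact ENNReal.natCast_ne_top _

/-- greedy selection -/
lemma greedy (T : X → X) (δ : ℝ) (hδ : 0 < δ) (h : ℝ) (j : ℕ) (E : Finset X)
    (hE : ∃ m ≥ j, EReal.exp ((h : EReal) * m) ≤ sepMaxCard T m δ (E : Set X)) :
    ∃ F : Finset X, F ⊆ E ∧
      (∃ m ≥ j, EReal.exp ((h : EReal) * m) ≤ sepMaxCard T m δ (F : Set X)) ∧
      ∀ m ≥ j, sepMaxCard T m δ (F : Set X) ≤ EReal.exp ((h : EReal) * m) + 1 := by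
  classical
  induction E using Finset.induction_on with
  | empty =>
    refine ⟨∅, le_rfl, hE, ?_⟩
    intro m _
    simp [smc_empty]
  | insert a E ha ih =>
    by_cases hp : ∃ m ≥ j, EReal.exp ((h : EReal) * m) ≤ sepMaxCard T m δ (E : Set X)
    · obtain ⟨F, hF, h1, h2⟩ := ih hp
      exact ⟨F, hF.trans (Finset.subset_insert _ _), h1, h2⟩
    · refine ⟨insert a E, le_rfl, hE, ?_⟩
      intro m hm
      push Not at hp
      rw [Finset.coe_insert, Set.insert_eq, Set.union_comm]
      exact (smc_union ..).trans (add_le_add (hp m hm).le (smc_singleton T m δ hδ a))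

lemma growth_nat : expGrowthSup (fun n : ℕ => (n : ℝ≥0∞)) ≤ 0 := by
  rw [expGrowthSup_le_iff]
  intro b hb
  obtain ⟨c, hc0, hcb⟩ := EReal.lt_iff_exists_real_btwn.1 hb
  have hc : 0 < c := by exact_mod_cast hc0
  have h1 := tendsto_pow_const_div_const_pow_of_one_lt 1 (Real.one_lt_exp_iff.2 hc)
  have h2 := h1.eventually (gt_mem_nhds (zero_lt_one))
  filter_upwards [h2] with n hn
  have h3 : (n : ℝ) ≤ Real.exp (c * n) := by
    rw [div_lt_one (by positivity), pow_one, ← Real.exp_nat_mul, mul_comm] at hn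
    exact hn.le
  have h4 : EReal.exp ((c : EReal) * n) ≤ EReal.exp (b * n) := by
    apply EReal.exp_monotone
    gcongr
  refine le_trans ?_ h4
  have : ((c : EReal) * n) = ((c * n : ℝ) : EReal) := by push_cast; rfl
  rw [this, EReal.exp_coe, ← ENNReal.ofReal_natCast]
  exact ENNReal.ofReal_le_ofReal h3

lemma growth_bound (h : ℝ) (h0 : 0 < h) (u : ℕ → ℝ≥0∞)
    (hu : ∀ n : ℕ, u n ≤ n * (EReal.exp ((h : EReal) * n) + 1) + 1) :
    expGrowthSup u ≤ h := by
  have h1 : expGrowthSup u ≤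
      expGrowthSup ((fun n : ℕ => (n : ℝ≥0∞)) * (fun n : ℕ => EReal.exp ((h : EReal) * n))) := by
    refine expGrowthSup_le_of_eventually_le (b := 3) (by simp) ?_
    filter_upwards [eventually_ge_atTop 1] with n hn
    refine (hu n).trans ?_
    have he : (1 : ℝ≥0∞) ≤ EReal.exp ((h : EReal) * n) := by
      rw [← EReal.exp_zero]
      apply EReal.exp_monotone
      have : (0 : EReal) ≤ h := by exact_mod_cast h0.le
      positivity
    have hn' : (1 : ℝ≥0∞) ≤ n := by exact_mod_cast hn
    simp only [Pi.mul_apply]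
    set e := EReal.exp ((h : EReal) * n)
    calc (n : ℝ≥0∞) * (e + 1) + 1 ≤ n * (e + e) + n * e := by
          gcongr
          calc (1 : ℝ≥0∞) = 1 * 1 := by simp
            _ ≤ n * e := by gcongr
      _ = 3 * (n * e) := by ring
  refine h1.trans ((expGrowthSup_mul_le ?_ ?_).trans ?_)
  · right; rw [expGrowthSup_exp]; exact EReal.coe_ne_top h
  · right; rw [expGrowthSup_exp]; exact EReal.coe_ne_bot h
  · rw [expGrowthSup_exp]
    calc _ ≤ (0 : EReal) + h := by gcongr; exact growth_nat
      _ = h := by simp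

lemma exists_local (T : X → X) (δ : ℝ) (hδ : 0 < δ) (h : ℝ) (h0 : 0 < h) (j : ℕ) (A : Set X)
    (hA : (h : EReal) < sepEnt T δ A) :
    ∃ F : Finset X, (F : Set X) ⊆ A ∧
      (∃ m ≥ j, EReal.exp ((h : EReal) * m) ≤ sepMaxCard T m δ (F : Set X)) ∧
      ∀ m ≥ j, sepMaxCard T m δ (F : Set X) ≤ EReal.exp ((h : EReal) * m) + 1 := by
  obtain ⟨a, ha, haA⟩ := EReal.lt_iff_exists_real_btwn.1 hA
  have hf := frequently_exp_le haA
  obtain ⟨n, hn, hle⟩ := (frequently_atTop.1 hf) (j + 1)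
  have hlt : EReal.exp ((h : EReal) * n) < sepMaxCard T n δ A := by
    refine lt_of_lt_of_le ?_ hle
    rw [EReal.exp_lt_exp_iff]
    have h1 : h < a := by exact_mod_cast ha
    have h2 : (0 : ℝ) < n := by exact_mod_cast (by omega : 0 < n)
    have := mul_lt_mul_of_pos_right h1 h2
    exact_mod_cast this
  simp only [sepMaxCard, lt_iSup_iff] at hlt
  obtain ⟨E, hE, hlt⟩ := hlt
  have hp : ∃ m ≥ j, EReal.exp ((h : EReal) * m) ≤ sepMaxCard T m δ (E : Set X) :=
    ⟨n, by omega, hlt.le.trans (le_iSup₂_of_le E ⟨le_rfl, hE.2⟩ le_rfl)⟩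
  obtain ⟨F, hF, h1, h2⟩ := greedy T δ hδ h j E hp
  exact ⟨F, fun x hx => hE.1 (hF hx), h1, h2⟩

lemma main_step [CompactSpace X] (T : X ≃ₜ X) (K : Set X) (hK : IsCompact K)
    (h : ℝ) (h0 : 0 < h) (δ : ℝ) (hδ : 0 < δ) (hlt : (h : EReal) < sepEnt (⇑T) δ K) :
      ∃ Khδ : Set X, Khδ ⊆ K ∧ Khδ.Countable ∧ IsCompact Khδ ∧
        (∃ x₀ : X, {y | AccPt y (𝓟 Khδ)} = {x₀}) ∧
        sepEnt (⇑T) δ Khδ = (h : EReal) := by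
  have hx : ∃ x₀ ∈ K, ∀ t ∈ 𝓝[K] x₀, (h : EReal) < sepEnt (⇑T) δ t := by
    by_contra hcon
    push Not at hcon
    refine absurd hlt (not_lt.2 ?_)
    refine hK.induction_on (p := fun s => sepEnt (⇑T) δ s ≤ (h : EReal)) ?_ ?_ ?_ hcon
    · simp [sepEnt_empty]
    · exact fun s t hst ht => (sepEnt_mono _ _ hst).trans ht
    · exact fun s t hs ht => (sepEnt_union ..).trans (sup_le hs ht)
  obtain ⟨x₀, hx₀, hloc⟩ := hx
  let V : ℕ → Set X := fun j =>
    {y | ∀ i < j, dist ((⇑T)^[i] y) ((⇑T)^[i] x₀) < δ / 2} ∩ ball x₀ (1 / ((j : ℝ) + 1))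
  have hV : ∀ j, V j ∈ 𝓝 x₀ := by
    intro j
    refine inter_mem ?_ (ball_mem_nhds _ (by positivity))
    have : {y | ∀ i < j, dist ((⇑T)^[i] y) ((⇑T)^[i] x₀) < δ / 2} =
        ⋂ i ∈ Finset.range j, {y | dist ((⇑T)^[i] y) ((⇑T)^[i] x₀) < δ / 2} := by
      ext; simp
    rw [this, Filter.biInter_finset_mem]
    intro i _
    have hc : Continuous fun y => dist ((⇑T)^[i] y) ((⇑T)^[i] x₀) :=
      (T.continuous.iterate i).dist continuous_const
    exact (isOpen_lt hc continuous_const).mem_nhds (by simp [hδ])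
  have hex : ∀ j, ∃ F : Finset X, (F : Set X) ⊆ K ∩ V j ∧
      (∃ m ≥ j, EReal.exp ((h : EReal) * m) ≤ sepMaxCard (⇑T) m δ (F : Set X)) ∧
      ∀ m ≥ j, sepMaxCard (⇑T) m δ (F : Set X) ≤ EReal.exp ((h : EReal) * m) + 1 := fun j =>
    exists_local T δ hδ h h0 j _ (hloc _ (inter_mem self_mem_nhdsWithin
      (mem_nhdsWithin_of_mem_nhds (hV j))))
  choose F hFsub hFlow hFup using hex
  let K' : Set X := {x₀} ∪ ⋃ j, (F j : Set X)
  have hK'K : K' ⊆ K := by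
    refine union_subset (by simpa using hx₀) (iUnion_subset fun j => ?_)
    exact (hFsub j).trans inter_subset_left
  have hent : sepEnt (⇑T) δ K' = (h : EReal) := by
    apply le_antisymm
    · rw [sepEnt_eq]
      refine growth_bound h h0 _ fun n => ?_
      have hsub : K' ⊆ (⋃ j < n, (F j : Set X)) ∪
          {y | ∀ i < n, dist ((⇑T)^[i] y) ((⇑T)^[i] x₀) < δ / 2} := by
        rintro y (rfl | hy)
        · right
          intro i _
          simp [hδ]
        · obtain ⟨j, hj⟩ := mem_iUnion.1 hy
          by_cases hjn : j < n
          · left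
            exact mem_biUnion (show j ∈ {j | j < n} from hjn) hj
          · right
            intro i hi
            exact (hFsub j hj).2.1 i (by omega)
      refine (smc_mono _ _ _ hsub).trans ((smc_union ..).trans (add_le_add ?_ ?_))
      · exact smc_biUnion _ _ _ _ _ _ fun j hj => hFup j n hj.le
      · refine smc_le_one _ _ _ _ fun x hx y hy i hi => ?_
        have h1 := hx i hi
        have h2 := hy i hi
        have h3 := dist_triangle_right ((⇑T)^[i] x) ((⇑T)^[i] y) ((⇑T)^[i] x₀)
        linarith
    · rw [sepEnt_eq]
      refine Frequently.le_expGrowthSup (frequently_atTop.2 fun j => ?_)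
      obtain ⟨m, hm, hle⟩ := hFlow j
      exact ⟨m, hm, hle.trans (smc_mono _ _ _ ((subset_iUnion (fun j => (F j : Set X)) j).trans
        subset_union_right))⟩
  have hacc : ∀ y, AccPt y (𝓟 K') → y = x₀ := by
    intro y hy
    by_contra hne
    have hd : 0 < dist y x₀ := dist_pos.2 hne
    obtain ⟨N, hN⟩ := exists_nat_one_div_lt (half_pos hd)
    have hfin : (K' ∩ ball y (dist y x₀ / 2)).Finite := by
      refine Set.Finite.subset (s := {x₀} ∪ ⋃ j ∈ Finset.range N, (F j : Set X)) ?_ ?_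
      · exact (finite_singleton _).union
          (Set.Finite.biUnion (Finset.finite_toSet _) fun j _ => Finset.finite_toSet _)
      · rintro z ⟨hz | hz, hzy⟩
        · exact Or.inl hz
        · obtain ⟨j, hj⟩ := mem_iUnion.1 hz
          right
          refine mem_biUnion (x := j) ?_ hj
          by_contra hjN
          have hjN : N ≤ j := by simpa using hjN
          have h1 : dist z x₀ < 1 / ((j : ℝ) + 1) := (hFsub j hj).2.2
          have h2 : 1 / ((j : ℝ) + 1) ≤ 1 / ((N : ℝ) + 1) := by gcongr
          have h3 : dist z y < dist y x₀ / 2 := hzy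
          have h4 := dist_triangle_left y x₀ z
          linarith
    have h5 : AccPt y (𝓟 (K' ∩ ball y (dist y x₀ / 2))) := by
      rw [accPt_iff_nhds] at hy ⊢
      intro U hU
      obtain ⟨z, hz, hzy⟩ := hy (U ∩ ball y (dist y x₀ / 2))
        (inter_mem hU (ball_mem_nhds _ (half_pos hd)))
      exact ⟨z, ⟨hz.1.1, hz.2, hz.1.2⟩, hzy⟩
    exact Set.Infinite.of_accPt h5 hfin
  have hclosed : IsClosed K' := by
    rw [isClosed_iff_derivedSet_subset]
    intro y hy
    rw [hacc y hy]
    exact Or.inl rfl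
  have hinf : K'.Infinite := by
    intro hfin
    have := sepEnt_finite (⇑T) δ hfin
    rw [hent] at this
    exact absurd h0 (not_lt.2 (by exact_mod_cast this))
  refine ⟨K', hK'K, ?_, hclosed.isCompact, ⟨x₀, ?_⟩, hent⟩
  · exact (countable_singleton _).union (countable_iUnion fun j => (F j).countable_toSet)
  · obtain ⟨y, hy⟩ := hinf.exists_accPt_principal
    ext z
    constructor
    · exact hacc z
    · rintro rfl
      rw [← hacc y hy]
      exact hy

end Helpers

/-- If `K` is compact with `h(T,K) > 0` then for every `0 < h < h(T,K)`
there is `δ₀ > 0` such that for all `0 < δ ≤ δ₀` there is a countable compact subset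
`K_{h,δ} ⊆ K` with a unique limit point satisfying `s(d,T,δ,K_{h,δ}) = h`. -/
theorem exists_separated_entropy_subset {X : Type*} [MetricSpace X] [CompactSpace X]
    (T : X ≃ₜ X) (K : Set X) (hK : IsCompact K) (hpos : 0 < subEnt (⇑T) K)
    (h : ℝ) (h0 : 0 < h) (hlt : (h : EReal) < subEnt (⇑T) K) :
    ∃ δ₀ : ℝ, 0 < δ₀ ∧ ∀ δ : ℝ, 0 < δ → δ ≤ δ₀ →
      ∃ Khδ : Set X, Khδ ⊆ K ∧ Khδ.Countable ∧ IsCompact Khδ ∧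
        (∃ x₀ : X, {y | AccPt y (𝓟 Khδ)} = {x₀}) ∧
        sepEnt (⇑T) δ Khδ = (h : EReal) := by
  simp only [subEnt, lt_iSup_iff] at hlt
  obtain ⟨δ₀, hδ₀, hlt'⟩ := hlt
  refine ⟨δ₀, hδ₀, fun δ hδ hle => ?_⟩
  exact main_step T K hK h h0 δ hδ (hlt'.trans_le (sepEnt_anti _ hle K))
end
end

section
/- Let (X,T) be an expansive topological dynamical system with metric d and expansive constant δ > 0. Then for every compact subset K ⊆ X, h(T,K) = s(d,T,δ/2,K), i.e. the topological entropy of K equals limsup_{n→∞} (1/n) log s_n(d,T,δ/2,K). -/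
open Filter Set Metric MeasureTheory
open scoped ENNReal Topology

noncomputable section

variable {X Y : Type*}

section Helpers

theorem aux_compact {X : Type*} [MetricSpace X] [CompactSpace X]
    (T : X ≃ₜ X) (δ : ℝ) (hexp : ExpansiveWith T δ) (ε : ℝ) (hε : 0 < ε) :
    ∃ N : ℕ, ∀ x y : X, (∀ j ≤ N, dist (T^[j] x) (T^[j] y) ≤ δ ∧
      dist (T.symm^[j] x) (T.symm^[j] y) ≤ δ) → dist x y ≤ ε := by
  let A : ℕ → Set (X × X) := fun N => {p | ε ≤ dist p.1 p.2 ∧ ∀ j ≤ N,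
    dist (T^[j] p.1) (T^[j] p.2) ≤ δ ∧ dist (T.symm^[j] p.1) (T.symm^[j] p.2) ≤ δ}
  have c1 : ∀ j : ℕ, Continuous (T^[j]) := fun j => T.continuous.iterate j
  have c2 : ∀ j : ℕ, Continuous (T.symm^[j]) := fun j => T.symm.continuous.iterate j
  have hcl : ∀ N, IsClosed (A N) := by
    intro N
    have : A N = {p | ε ≤ dist p.1 p.2} ∩ ⋂ j, ⋂ (_ : j ≤ N),
      ({p : X × X | dist (T^[j] p.1) (T^[j] p.2) ≤ δ} ∩
        {p : X × X | dist (T.symm^[j] p.1) (T.symm^[j] p.2) ≤ δ}) := by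
      ext p; simp [A]
    rw [this]
    refine (isClosed_le continuous_const continuous_dist).inter ?_
    refine isClosed_iInter fun j => isClosed_iInter fun _ => IsClosed.inter ?_ ?_
    · exact isClosed_le (((c1 j).comp continuous_fst).dist ((c1 j).comp continuous_snd))
        continuous_const
    · exact isClosed_le (((c2 j).comp continuous_fst).dist ((c2 j).comp continuous_snd))
        continuous_const
  by_contra hcon
  push Not at hcon
  have hne : (⋂ N, A N).Nonempty := by
    refine IsCompact.nonempty_iInter_of_sequence_nonempty_isCompact_isClosed A ?_ ?_
      (hcl 0).isCompact hcl
    · intro n p hp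
      exact ⟨hp.1, fun j hj => hp.2 j (by omega)⟩
    · intro n
      obtain ⟨x, y, h, h'⟩ := hcon n
      exact ⟨(x, y), h'.le, h⟩
  obtain ⟨⟨x, y⟩, hp⟩ := hne
  rw [mem_iInter] at hp
  have hxy : x ≠ y := by
    rintro rfl
    have := (hp 0).1
    simp at this
    linarith
  obtain ⟨n, hn⟩ := hexp x y hxy
  rcases n with n | n
  · exact absurd ((hp n).2 n le_rfl).1 (not_le.mpr hn)
  · exact absurd ((hp (n+1)).2 (n+1) le_rfl).2 (not_le.mpr hn)

theorem aux_cells {X : Type*} [MetricSpace X] [CompactSpace X]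
    (T : X ≃ₜ X) (δ : ℝ) (hδ : 0 < δ) (N : ℕ) :
    ∃ (t : Finset X) (g : X → X), (∀ x, g x ∈ t) ∧ ∀ x y, g x = g y →
      ∀ j ≤ N, dist (T.symm^[j] x) (T.symm^[j] y) ≤ δ := by
  have h1 : ∀ᶠ p in uniformity X, ∀ j ∈ Finset.range (N+1),
      dist (T.symm^[j] p.1) (T.symm^[j] p.2) < δ := by
    rw [Filter.eventually_all_finset]
    intro j _
    have hu : UniformContinuous (T.symm^[j]) :=
      CompactSpace.uniformContinuous_of_continuous (T.symm.continuous.iterate j)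
    exact hu (Metric.dist_mem_uniformity hδ)
  obtain ⟨η, hη, h2⟩ := Metric.mem_uniformity_dist.1 h1
  obtain ⟨t, -, htf, ht⟩ := finite_cover_balls_of_compact (isCompact_univ (X := X)) (half_pos hη)
  have h3 : ∀ x : X, ∃ c ∈ t, dist x c < η / 2 := by
    intro x
    have := ht (mem_univ x)
    simpa using this
  choose g hg hg' using h3
  refine ⟨htf.toFinset, g, fun x => by simpa using hg x, fun x y hxy j hj => ?_⟩
  have : dist x y < η := by
    have a := hg' x
    have b := hg' y
    rw [← hxy] at b
    have := dist_triangle_right x y (g x)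
    linarith
  exact (h2 this j (by simp; omega)).le

theorem aux_max {X : Type*} [MetricSpace X] (T : X → X) (n : ℕ) (ε : ℝ) (hε : 0 ≤ ε) (K : Set X)
    (h : sepMaxCard T n ε K ≠ ⊤) :
    ∃ F : Finset X, (F.card : ℝ≥0∞) ≤ sepMaxCard T n ε K ∧
      ∀ x ∈ K, ∃ y ∈ F, ∀ i < n, dist (T^[i] x) (T^[i] y) ≤ ε := by
  classical
  by_contra hcon
  push Not at hcon
  have hle : ∀ F : Finset X, (↑F ⊆ K ∧ IsSep T n ε (↑F : Set X)) →
      (F.card : ℝ≥0∞) ≤ sepMaxCard T n ε K := fun F hF =>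
    le_iSup₂_of_le (f := fun (E : Finset X) (_ : ↑E ⊆ K ∧ IsSep T n ε (↑E : Set X)) =>
      (E.card : ℝ≥0∞)) F hF le_rfl
  have key : ∀ k : ℕ, ∃ F : Finset X, (↑F ⊆ K ∧ IsSep T n ε (↑F : Set X)) ∧ F.card = k := by
    intro k
    induction k with
    | zero => exact ⟨∅, by simp [IsSep], rfl⟩
    | succ k ih =>
      obtain ⟨F, hF, hc⟩ := ih
      obtain ⟨x, hxK, hx⟩ := hcon F (hle F hF)
      have hxF : x ∉ F := by
        intro hxF
        obtain ⟨i, _, hi⟩ := hx x hxF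
        simp at hi
        linarith
      refine ⟨insert x F, ⟨?_, ?_⟩, by rw [Finset.card_insert_of_notMem hxF, hc]⟩
      · rw [Finset.coe_insert]
        exact insert_subset hxK hF.1
      · rw [Finset.coe_insert]
        refine hF.2.insert fun y hy _ => ⟨hx y hy, ?_⟩
        obtain ⟨i, hi, h⟩ := hx y hy
        exact ⟨i, hi, by rwa [dist_comm]⟩
  obtain ⟨k, hk⟩ := ENNReal.exists_nat_gt h
  obtain ⟨F, hF, hc⟩ := key k
  have := hle F hF
  rw [hc] at this
  exact absurd hk (not_lt.mpr this)

theorem aux_card {X : Type*} [MetricSpace X] [CompactSpace X]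
    (T : X ≃ₜ X) (δ : ℝ) (hδ : 0 < δ) (hexp : ExpansiveWith T δ) (K : Set X)
    (ε : ℝ) (hε : 0 < ε) :
    ∃ N M : ℕ, 0 < M ∧ ∀ n, sepMaxCard T n ε K ≤ sepMaxCard T (n + N) (δ / 2) K * M := by
  classical
  obtain ⟨N, hN⟩ := aux_compact T δ hexp ε hε
  obtain ⟨t, g, hgt, hg⟩ := aux_cells T δ hδ N
  refine ⟨N, t.card + 1, by omega, fun n => ?_⟩
  by_cases htop : sepMaxCard T (n + N) (δ / 2) K = ⊤
  · rw [htop, ENNReal.top_mul (by simp)]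
    exact le_top
  obtain ⟨F, hFc, hF⟩ := aux_max T (n + N) (δ / 2) (by positivity) K htop
  refine iSup₂_le fun E hE => ?_
  have hF' : ∀ x, ∃ y, x ∈ K → y ∈ F ∧ ∀ i < n + N, dist (T^[i] x) (T^[i] y) ≤ δ / 2 := by
    intro x
    by_cases hx : x ∈ K
    · obtain ⟨y, hy, h⟩ := hF x hx
      exact ⟨y, fun _ => ⟨hy, h⟩⟩
    · exact ⟨x, fun h => absurd h hx⟩
  choose f hf using hF'
  have hcard : E.card ≤ (F ×ˢ t).card := by
    refine Finset.card_le_card_of_injOn (fun x => (f x, g x)) ?_ ?_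
    · intro x hx
      simp only [Finset.coe_product, mem_prod, Finset.mem_coe]
      exact ⟨(hf x (hE.1 hx)).1, hgt x⟩
    · intro x hx y hy hxy
      simp only [Prod.mk.injEq] at hxy
      by_contra hne
      obtain ⟨i, hi, hd⟩ := hE.2 hx hy hne
      refine absurd (hN _ _ ?_) (not_le.mpr hd)
      have hpos : ∀ m < n + N, dist (T^[m] x) (T^[m] y) ≤ δ := by
        intro m hm
        have a := (hf x (hE.1 hx)).2 m hm
        have b := (hf y (hE.1 hy)).2 m hm
        rw [← hxy.1] at b
        have := dist_triangle_right (T^[m] x) (T^[m] y) (T^[m] (f x))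
        linarith
      intro j hj
      constructor
      · rw [← Function.iterate_add_apply, ← Function.iterate_add_apply]
        exact hpos _ (by omega)
      · have hinv : ∀ k : ℕ, ∀ z : X, T.symm^[k] (T^[k] z) = z := fun k =>
          Function.LeftInverse.iterate (f := T) (g := T.symm) T.symm_apply_apply k
        rcases le_total j i with hji | hij
        · obtain ⟨k, rfl⟩ := Nat.exists_eq_add_of_le hji
          rw [Function.iterate_add_apply, Function.iterate_add_apply, hinv, hinv]
          exact hpos _ (by omega)
        · obtain ⟨k, rfl⟩ := Nat.exists_eq_add_of_le' hij
          rw [Function.iterate_add_apply, Function.iterate_add_apply, hinv, hinv]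
          exact hg x y hxy.2 k (by omega)
  calc (E.card : ℝ≥0∞) ≤ ((F.card * t.card : ℕ) : ℝ≥0∞) := by
        rw [← Finset.card_product]; exact_mod_cast hcard
    _ ≤ (F.card : ℝ≥0∞) * ((t.card + 1 : ℕ) : ℝ≥0∞) := by
        push_cast
        gcongr
        exact le_self_add
    _ ≤ _ := by gcongr

theorem aux_limsup (a b : ℕ → ℝ≥0∞) (N M : ℕ) (hM : 0 < M)
    (h : ∀ n, a n ≤ b (n + N) * M) :
    Filter.atTop.limsup (fun n : ℕ => ENNReal.log (a n) / (n : EReal)) ≤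
      Filter.atTop.limsup (fun n : ℕ => ENNReal.log (b n) / (n : EReal)) := by
  refine EReal.le_of_forall_lt_iff_le.1 fun c hc => ?_
  have h1 := Filter.eventually_lt_of_limsup_lt hc
  have hM' : ENNReal.log (M : ℝ≥0∞) = ((Real.log M : ℝ) : EReal) := by
    rw [ENNReal.log_pos_real (by simp; omega) (by simp)]
    simp
  have h2 : ∀ᶠ n : ℕ in atTop, ENNReal.log (a n) / (n : EReal) ≤
      (((c * (n + N) + Real.log M) / n : ℝ) : EReal) := by
    have h1' := (tendsto_add_atTop_nat N).eventually h1
    filter_upwards [h1', eventually_gt_atTop 0] with n hn hn0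
    have hb : ENNReal.log (b (n + N)) ≤ ((c * (n + N) : ℝ) : EReal) := by
      have := (EReal.div_le_iff_le_mul (by exact_mod_cast (by omega : 0 < n + N))
        (EReal.natCast_ne_top _)).1 hn.le
      convert this using 1
      push_cast
      rw [mul_comm]
    have ha : ENNReal.log (a n) ≤ ((c * (n + N) + Real.log M : ℝ) : EReal) := by
      calc _ ≤ ENNReal.log (b (n + N) * M) := ENNReal.log_monotone (h n)
        _ = ENNReal.log (b (n + N)) + ENNReal.log M := ENNReal.log_mul_add
        _ ≤ ((c * (n + N) : ℝ) : EReal) + ((Real.log M : ℝ) : EReal) := by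
          rw [hM']; gcongr
        _ = _ := by rw [← EReal.coe_add]
    rw [EReal.coe_div]
    exact EReal.div_le_div_right_of_nonneg (by exact_mod_cast hn0.le) ha
  have h3 : Tendsto (fun n : ℕ => (((c * (n + N) + Real.log M) / n : ℝ) : EReal)) atTop
      (𝓝 (c : EReal)) := by
    refine (continuous_coe_real_ereal.tendsto c).comp ?_
    have : Tendsto (fun n : ℕ => c + (c * N + Real.log M) / (n : ℝ)) atTop (𝓝 (c + 0)) :=
      tendsto_const_nhds.add (tendsto_const_div_atTop_nhds_zero_nat _)
    rw [add_zero] at this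
    refine this.congr' ?_
    filter_upwards [eventually_gt_atTop 0] with n hn
    have : (n : ℝ) ≠ 0 := by positivity
    field_simp
    ring
  exact (Filter.limsup_le_limsup h2).trans h3.limsup_eq.le

end Helpers

/-- If `(X,T)` is expansive with expansive constant `δ > 0`, then for every
compact `K ⊆ X`, `h(T,K) = s(d,T,δ/2,K)`. -/
theorem expansive_entropy_eq_sep {X : Type*} [MetricSpace X] [CompactSpace X]
    (T : X ≃ₜ X) (δ : ℝ) (hδ : 0 < δ) (hexp : ExpansiveWith T δ)
    (K : Set X) (hK : IsCompact K) :
    subEnt (⇑T) K = sepEnt (⇑T) (δ / 2) K := by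
  refine le_antisymm (iSup₂_le fun ε hε => ?_) ?_
  · obtain ⟨N, M, hM, h⟩ := aux_card T δ hδ hexp K ε hε
    exact aux_limsup _ _ N M hM h
  · exact le_iSup₂ (f := fun (ε : ℝ) (_ : 0 < ε) => sepEnt (⇑T) ε K) (δ / 2) (half_pos hδ)
end
end

section
/- (Bridge Lemma.) Let (X,T) be a general topological dynamical system, U a finite Borel cover of X and K ⊆ X. Then h^B_U(T,K) ≤ liminf_{n→∞} (1/n) log N(U_0^{n−1}, K) ≤ h_U(T,K). -/
open Filter Set Metric MeasureTheory
open scoped ENNReal Topology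

noncomputable section

variable {X Y : Type*}

theorem dynCov_mono_refines {X : Type*} (T : X → X) (U : Finset (Set X)) {k n : ℕ} (h : k ≤ n)
    (E : Set X) (hE : Refines E (dynCov T U n)) : Refines E (dynCov T U k) := by
  induction n, h using Nat.le_induction with
  | base => exact hE
  | succ n hn ih =>
    apply ih
    obtain ⟨A, hA, hEA⟩ := hE
    simp only [dynCov, covJoin, Finset.mem_image, Finset.mem_product] at hA
    obtain ⟨p, hp, rfl⟩ := hA
    exact ⟨p.1, hp.1, fun x hx => (hEA hx).1⟩

theorem dynCov_refines_image {X : Type*} (T : X → X) (U : Finset (Set X)) {n : ℕ}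
    (E : Set X) (hE : Refines E (dynCov T U n)) : ∀ i < n, Refines (T^[i] '' E) U := by
  intro i hi
  obtain ⟨A, hA, hEA⟩ := dynCov_mono_refines T U (Nat.succ_le_of_lt hi) E hE
  simp only [Nat.succ_eq_add_one, dynCov, covJoin, Finset.mem_image, Finset.mem_product] at hA
  obtain ⟨p, ⟨_, B, hB, hBp⟩, rfl⟩ := hA
  refine ⟨B, hB, ?_⟩
  rintro _ ⟨x, hx, rfl⟩
  have := (hEA hx).2
  rw [← hBp] at this
  exact this

theorem expWeight_le {lam : ℝ} (hl : 0 < lam) {n : ℕ} {m : ℕ∞} (h : (n : ℕ∞) ≤ m) :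
    expWeight lam m ≤ ENNReal.ofReal (Real.exp (-(lam * (n : ℝ)))) := by
  unfold expWeight
  split_ifs with h1
  · exact zero_le
  · lift m to ℕ using h1
    have h2 : n ≤ m := by exact_mod_cast h
    apply ENNReal.ofReal_le_ofReal
    apply Real.exp_le_exp.2
    simp only [ENat.toNat_coe]
    have : (n : ℝ) ≤ m := by exact_mod_cast h2
    nlinarith

theorem mTU_le_of_cov {X : Type*} (T : X → X) (U : Finset (Set X)) (K : Set X)
    {lam s : ℝ} (hl : 0 < lam) {k n : ℕ} (hkn : k ≤ n)
    (h : covCard (dynCov T U n) K < ENNReal.ofReal (Real.exp (s * n))) :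
    mTU T U K lam k ≤ ENNReal.ofReal (Real.exp (-((lam - s) * n))) := by
  unfold covCard at h
  simp only [iInf_lt_iff] at h
  obtain ⟨V, ⟨hVU, hKV⟩, hV⟩ := h
  have href : ∀ E ∈ V, Refines E (dynCov T U n) := fun E hE => ⟨E, hVU hE, Subset.rfl⟩
  refine (iInf₂_le (↑V : Set (Set X)) ⟨V.countable_toSet, hKV, fun E hE =>
    dynCov_mono_refines T U hkn E (href E hE)⟩).trans ?_
  have h1 : ∀ E : (↑V : Set (Set X)), expWeight lam (nTU T U (E : Set X)) ≤
      ENNReal.ofReal (Real.exp (-(lam * (n : ℝ)))) := by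
    intro E
    apply expWeight_le hl
    exact le_iSup₂_of_le n (dynCov_refines_image T U E (href E E.2)) le_rfl
  refine (ENNReal.tsum_le_tsum h1).trans ?_
  have h2 : ∑' _ : (↑V : Set (Set X)), ENNReal.ofReal (Real.exp (-(lam * (n : ℝ)))) =
      (V.card : ℝ≥0∞) * ENNReal.ofReal (Real.exp (-(lam * (n : ℝ)))) := by
    rw [tsum_fintype]
    simp
  rw [h2]
  refine (mul_le_mul_left hV.le _).trans ?_
  rw [← ENNReal.ofReal_mul (Real.exp_pos _).le, ← Real.exp_add]
  apply le_of_eq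
  congr 2
  ring

theorem covCard_one_le {X : Type*} (U : Finset (Set X)) {K : Set X} (hK : K.Nonempty) :
    1 ≤ covCard U K := by
  refine le_iInf₂ fun V hV => ?_
  obtain ⟨x, hx⟩ := hK
  obtain ⟨A, hA, _⟩ := hV.2 hx
  have : 0 < V.card := Finset.card_pos.2 ⟨A, hA⟩
  exact_mod_cast this

/-- Bridge Lemma. For a GTDS `(X,T)`, a finite Borel cover `U` of `X` and
`K ⊆ X`: `h^B_U(T,K) ≤ liminf_n (1/n) log N(U_0^{n-1},K) ≤ h_U(T,K)`. -/
theorem bridge_lemma {X : Type*} [MetricSpace X] [CompactSpace X]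
    [MeasurableSpace X] [BorelSpace X]
    (T : X → X) (hT : Continuous T) (U : Finset (Set X))
    (hUm : ∀ A ∈ U, MeasurableSet A) (hUc : ⋃₀ (↑U : Set (Set X)) = univ) (K : Set X) :
    hBU T U K ≤
      (atTop.liminf fun n : ℕ => ENNReal.log (covCard (dynCov T U n) K) / (n : EReal)) ∧
    (atTop.liminf fun n : ℕ => ENNReal.log (covCard (dynCov T U n) K) / (n : EReal)) ≤
      hCov T U K := by
  refine ⟨?_, liminf_le_limsup⟩
  rcases K.eq_empty_or_nonempty with rfl | hK
  · have h0 : ∀ lam : ℝ, mTUlim T U ∅ lam = 0 := by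
      intro lam
      refine le_antisymm (iSup_le fun k => ?_) zero_le
      refine (iInf₂_le (∅ : Set (Set X)) ⟨countable_empty, by simp, by simp⟩).trans ?_
      simp
    have hb : hBU T U ∅ = ⊥ := by
      rw [EReal.eq_bot_iff_forall_lt]
      intro y
      refine (iInf₂_le (y - 1) (h0 (y - 1))).trans_lt ?_
      exact_mod_cast sub_one_lt y
    rw [hb]
    exact bot_le
  · by_contra hcon
    rw [not_le] at hcon
    obtain ⟨s, hs1, hs2⟩ := EReal.lt_iff_exists_real_btwn.1 hcon
    obtain ⟨lam, hl1, hl2⟩ := EReal.lt_iff_exists_real_btwn.1 hs2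
    refine absurd hl2 (not_lt.2 ?_)
    have hsl : s < lam := by exact_mod_cast hl1
    have hnn : (0 : EReal) ≤
        (atTop.liminf fun n : ℕ => ENNReal.log (covCard (dynCov T U n) K) / (n : EReal)) := by
      refine le_liminf_of_le (by isBoundedDefault) (Eventually.of_forall fun n => ?_)
      apply EReal.div_nonneg
      · rw [← ENNReal.log_one]
        exact ENNReal.log_monotone (covCard_one_le _ hK)
      · exact_mod_cast Nat.zero_le n
    have hs0 : 0 < s := by exact_mod_cast hnn.trans_lt hs1
    have hfreq := frequently_lt_of_liminf_lt (by isBoundedDefault) hs1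
    refine iInf₂_le lam ?_
    refine le_antisymm (iSup_le fun k => ?_) zero_le
    have htend : Tendsto (fun n : ℕ => ENNReal.ofReal (Real.exp (-((lam - s) * n)))) atTop
        (𝓝 0) := by
      rw [← ENNReal.ofReal_zero]
      refine ENNReal.tendsto_ofReal (Real.tendsto_exp_neg_atTop_nhds_zero.comp ?_)
      exact tendsto_natCast_atTop_atTop.const_mul_atTop (sub_pos.2 hsl)
    refine ge_of_tendsto_of_frequently htend ?_
    refine (hfreq.and_eventually ((eventually_ge_atTop k).and (eventually_ge_atTop 1))).mono ?_
    rintro n ⟨hn, hkn, hn1⟩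
    apply mTU_le_of_cov T U K (hs0.trans hsl) hkn
    rw [EReal.div_lt_iff (by exact_mod_cast hn1) (EReal.natCast_ne_top n)] at hn
    have h3 : ((s : EReal) * (n : EReal)) = ((s * n : ℝ) : EReal) := by push_cast; rfl
    rw [h3] at hn
    have h4 := EReal.exp_strictMono hn
    rwa [EReal.exp_coe, ENNReal.exp_log] at h4
end
end

section
/- (Non-Uniform Mass Distribution Principle.) Let (X,T) be a general topological dynamical system, d > 0, M ∈ ℕ, Z ⊆ X, α a finite Borel partition of X, U a finite Borel cover of X, and θ a Borel probability measure on X. Assume that each element of U has non-empty intersection with at most M elements of α. Suppose there exists Z_θ ⊆ Z with positive outer θ-measure θ*(Z_θ) > 0 such that for every x ∈ Z_θ there is c(x) > 0 with θ(α_0^{n−1}(x)) ≤ c(x) e^{−n d} for all n ∈ ℕ. Then h^B_U(T,Z) ≥ d − log M. In particular, h^B_α(T,Z) ≥ d. -/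
open Filter Set Metric MeasureTheory
open scoped ENNReal Topology

noncomputable section

variable {X Y : Type*}

theorem aux_cover {X : Type*} (T : X → X) (M : ℕ) (α U : Finset (Set X))
    (hαc : ⋃₀ (↑α : Set (Set X)) = univ)
    (hint : ∀ A ∈ U, {B ∈ (↑α : Set (Set X)) | (A ∩ B).Nonempty}.ncard ≤ M)
    (E : Set X) (n : ℕ) (h : ∀ i < n, Refines (T^[i] '' E) U) :
    ∃ S : Finset (Set X), S ⊆ dynCov T α n ∧ S.card ≤ M ^ n ∧ E ⊆ ⋃₀ (↑S : Set (Set X)) := by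
  classical
  induction n with
  | zero => exact ⟨{univ}, by simp [dynCov], by simp, by simp⟩
  | succ n ih =>
    obtain ⟨S, hS, hc, hE⟩ := ih fun i hi => h i (by omega)
    obtain ⟨A, hA, hEA⟩ := h n (by omega)
    let F : Finset (Set X) := α.filter fun B => (A ∩ B).Nonempty
    have hF : F.card ≤ M := by
      have h1 := hint A hA
      have h2 : {B ∈ (↑α : Set (Set X)) | (A ∩ B).Nonempty} = (↑F : Set (Set X)) := by
        ext B; simp [F]
      rwa [h2, Set.ncard_coe_finset] at h1
    refine ⟨(S ×ˢ F).image (fun p => p.1 ∩ T^[n] ⁻¹' p.2), ?_, ?_, ?_⟩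
    · intro C hC
      simp only [Finset.mem_image, Finset.mem_product, Prod.exists] at hC
      obtain ⟨P, B, ⟨hP, hB⟩, rfl⟩ := hC
      simp only [dynCov, covJoin, Finset.mem_image, Finset.mem_product, Prod.exists]
      exact ⟨P, T^[n] ⁻¹' B, ⟨hS hP, B, (Finset.mem_filter.1 hB).1, rfl⟩, rfl⟩
    · calc _ ≤ (S ×ˢ F).card := Finset.card_image_le
        _ = S.card * F.card := Finset.card_product _ _
        _ ≤ M ^ n * M := Nat.mul_le_mul hc hF
        _ = M ^ (n + 1) := (pow_succ _ _).symm
    · intro x hx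
      obtain ⟨P, hP, hxP⟩ := hE hx
      have : T^[n] x ∈ ⋃₀ (↑α : Set (Set X)) := by rw [hαc]; trivial
      obtain ⟨B, hB, hxB⟩ := this
      refine ⟨P ∩ T^[n] ⁻¹' B, ?_, hxP, hxB⟩
      simp only [Finset.coe_image, Set.mem_image]
      refine ⟨(P, B), ?_, rfl⟩
      simp only [Finset.mem_coe, Finset.mem_product]
      exact ⟨hP, Finset.mem_filter.2 ⟨hB, T^[n] x, hEA ⟨x, hx, rfl⟩, hxB⟩⟩

theorem aux_nTU {X : Type*} (T : X → X) (U : Finset (Set X)) (E : Set X) (n : ℕ)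
    (h : (n : ℕ∞) ≤ nTU T U E) : ∀ i < n, Refines (T^[i] '' E) U := by
  intro i hi
  by_contra hc
  have : nTU T U E ≤ (i : ℕ∞) := by
    refine iSup₂_le fun j hj => ?_
    by_contra hlt
    have : i < j := by
      have := not_le.1 hlt
      exact_mod_cast this
    exact hc (hj i this)
  have h2 := h.trans this
  have : n ≤ i := by exact_mod_cast h2
  omega

theorem aux_one_le {X : Type*} (T : X → X) (U : Finset (Set X)) (E : Set X)
    (h : Refines E (dynCov T U 1)) : 1 ≤ nTU T U E := by
  classical
  have h0 : Refines E U := by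
    obtain ⟨A, hA, hEA⟩ := h
    simp only [dynCov, covJoin, Finset.mem_image, Finset.mem_product, Prod.exists,
      Finset.mem_singleton] at hA
    obtain ⟨P, Q, ⟨rfl, B, hB, rfl⟩, rfl⟩ := hA
    exact ⟨B, hB, fun x hx => (hEA hx).2⟩
  refine le_iSup₂_of_le (f := fun (j : ℕ) (_ : ∀ i < j, Refines (T^[i] '' E) U) => (j : ℕ∞))
    1 ?_ (by simp)
  intro i hi
  obtain rfl : i = 0 := by omega
  simpa using h0

theorem aux_main_s13 {X : Type*} [MeasurableSpace X]
    (T : X → X) (d : ℝ) (M : ℕ) (hM : 0 < M)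
    (Z : Set X) (α : Finset (Set X)) (hαc : ⋃₀ (↑α : Set (Set X)) = univ)
    (U : Finset (Set X))
    (hint : ∀ A ∈ U, {B ∈ (↑α : Set (Set X)) | (A ∩ B).Nonempty}.ncard ≤ M)
    (θ : Measure X) (Zθ : Set X) (hZθ : Zθ ⊆ Z)
    (hZθpos : 0 < θ Zθ)
    (hsmall : ∀ x ∈ Zθ, ∃ c : ℝ, 0 < c ∧ ∀ n : ℕ, 0 < n →
      θ (atomAt (dynCov T α n) x) ≤ ENNReal.ofReal (c * Real.exp (-(n * d)))) :
    ((d - Real.log M : ℝ) : EReal) ≤ hBU T U Z := by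
  refine le_iInf₂ fun lam hlam => ?_
  rw [EReal.coe_le_coe_iff]
  by_contra hlt
  rw [not_le] at hlt
  let W : ℕ → Set X := fun N => {x ∈ Zθ | ∀ n : ℕ, 0 < n →
    θ (atomAt (dynCov T α n) x) ≤ ENNReal.ofReal (N * Real.exp (-(n * d)))}
  have hW : ∃ N, θ (W N) ≠ 0 := by
    by_contra hcon
    push Not at hcon
    have h1 : θ (⋃ N, W N) = 0 := measure_iUnion_null hcon
    have h2 : Zθ ⊆ ⋃ N, W N := by
      intro x hx
      obtain ⟨c, hc, hcx⟩ := hsmall x hx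
      obtain ⟨N, hN⟩ := exists_nat_ge c
      refine mem_iUnion.2 ⟨N, hx, fun n hn => (hcx n hn).trans ?_⟩
      apply ENNReal.ofReal_le_ofReal
      gcongr
    exact hZθpos.ne' (measure_mono_null h2 h1)
  obtain ⟨N, hN⟩ := hW
  have key : ∀ (E : Set X) (n : ℕ), 0 < n → (n : ℕ∞) ≤ nTU T U E →
      θ (E ∩ W N) ≤ ENNReal.ofReal (N * Real.exp (-((d - Real.log M) * n))) := by
    intro E n hn hE
    obtain ⟨S, hS, hc, hES⟩ := aux_cover T M α U hαc hint E n (aux_nTU T U E n hE)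
    have hsub : E ∩ W N ⊆ ⋃ A ∈ S, A ∩ W N := by
      rintro x ⟨hx, hxW⟩
      obtain ⟨A, hA, hxA⟩ := hES hx
      exact mem_iUnion₂.2 ⟨A, hA, hxA, hxW⟩
    have hMpos : (0 : ℝ) < M := by exact_mod_cast hM
    calc θ (E ∩ W N) ≤ θ (⋃ A ∈ S, A ∩ W N) := measure_mono hsub
      _ ≤ ∑ A ∈ S, θ (A ∩ W N) := measure_biUnion_finset_le _ _
      _ ≤ ∑ A ∈ S, ENNReal.ofReal (N * Real.exp (-(n * d))) := by
        refine Finset.sum_le_sum fun A hA => ?_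
        rcases (A ∩ W N).eq_empty_or_nonempty with h | ⟨x, hxA, hxW⟩
        · simp [h]
        · refine (measure_mono ?_).trans (hxW.2 n hn)
          exact inter_subset_left.trans (subset_sUnion_of_mem ⟨hS hA, hxA⟩)
      _ = (S.card : ℝ≥0∞) * ENNReal.ofReal (N * Real.exp (-(n * d))) := by
        rw [Finset.sum_const, nsmul_eq_mul]
      _ ≤ ((M ^ n : ℕ) : ℝ≥0∞) * ENNReal.ofReal (N * Real.exp (-(n * d))) := by
        gcongr
      _ = ENNReal.ofReal (N * Real.exp (-((d - Real.log M) * n))) := by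
        rw [← ENNReal.ofReal_natCast, ← ENNReal.ofReal_mul (by positivity)]
        congr 1
        have : Real.exp (-((d - Real.log M) * n)) = Real.exp (-(n * d)) * (M : ℝ) ^ n := by
          rw [← Real.exp_log hMpos, ← Real.exp_nat_mul, ← Real.exp_add, Real.exp_log hMpos]
          congr 1; ring
        rw [this]; push_cast; ring
  have key2 : ∀ E : Set X, 1 ≤ nTU T U E →
      θ (E ∩ W N) ≤ (N : ℝ≥0∞) * expWeight lam (nTU T U E) := by
    intro E hE
    by_cases htop : nTU T U E = ⊤
    · have hN0 : (N : ℝ≥0∞) ≠ 0 ∨ N = 0 := by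
        by_cases h : N = 0
        · exact Or.inr h
        · left; exact_mod_cast h
      by_cases hl : 0 ≤ lam
      · have hpos : 0 < d - Real.log M := by linarith
        have h0 : θ (E ∩ W N) ≤ 0 := by
          have ht : Tendsto (fun n : ℕ => ENNReal.ofReal
              (N * Real.exp (-((d - Real.log M) * n)))) atTop (𝓝 0) := by
            rw [← ENNReal.ofReal_zero]
            refine ENNReal.tendsto_ofReal ?_
            rw [← mul_zero (N : ℝ)]
            refine Tendsto.const_mul _ ?_
            refine Real.tendsto_exp_neg_atTop_nhds_zero.comp ?_
            exact tendsto_natCast_atTop_atTop.const_mul_atTop hpos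
          refine ge_of_tendsto ht ?_
          filter_upwards [eventually_gt_atTop 0] with n hn
          exact key E n hn (by rw [htop]; exact le_top)
        exact h0.trans bot_le
      · rcases hN0 with h | h
        · have : expWeight lam (nTU T U E) = ⊤ := by
            have h1 : ¬ 0 < lam := by linarith
            have h2 : lam ≠ 0 := by intro h; exact hl h.ge
            simp [expWeight, htop, h1, h2]
          rw [this, ENNReal.mul_top h]
          exact le_top
        · have := key E 1 one_pos (by simpa using hE)
          refine this.trans ?_
          simp [h]
    · obtain ⟨n, hn⟩ := ENat.ne_top_iff_exists.1 htop
      have hn1 : 0 < n := by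
        rw [← hn] at hE
        exact_mod_cast hE
      refine (key E n hn1 hn.le).trans ?_
      rw [← hn, expWeight, if_neg (by simp), ENat.toNat_coe, ← ENNReal.ofReal_natCast N,
        ← ENNReal.ofReal_mul (by positivity)]
      apply ENNReal.ofReal_le_ofReal
      gcongr
  have hm : mTU T U Z lam 1 = 0 := by
    have : mTU T U Z lam 1 ≤ mTUlim T U Z lam := le_iSup (fun k => mTU T U Z lam k) 1
    rw [hlam] at this
    exact le_antisymm this bot_le
  have hlow : θ (W N) / N ≤ mTU T U Z lam 1 := by
    refine le_iInf₂ fun ℰ hℰ => ?_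
    obtain ⟨hcnt, hcov, href⟩ := hℰ
    refine ENNReal.div_le_of_le_mul' ?_
    have : Countable ℰ := hcnt.to_subtype
    have hsub : W N ⊆ ⋃ E : ℰ, (E : Set X) ∩ W N := by
      intro x hx
      obtain ⟨E, hE, hxE⟩ := hcov (hZθ hx.1)
      exact mem_iUnion.2 ⟨⟨E, hE⟩, hxE, hx⟩
    calc θ (W N) ≤ _ := measure_mono hsub
      _ ≤ ∑' E : ℰ, θ ((E : Set X) ∩ W N) := measure_iUnion_le _
      _ ≤ ∑' E : ℰ, (N : ℝ≥0∞) * expWeight lam (nTU T U (E : Set X)) :=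
        ENNReal.tsum_le_tsum fun E => key2 E (aux_one_le T U E (href E E.2))
      _ = _ := ENNReal.tsum_mul_left
  rw [hm] at hlow
  have := le_antisymm hlow bot_le
  rw [ENNReal.div_eq_zero_iff] at this
  rcases this with h | h
  · exact hN h
  · exact ENNReal.natCast_ne_top N h

/-- Non-Uniform Mass Distribution Principle. -/
theorem nonuniform_mass_distribution {X : Type*} [MetricSpace X] [CompactSpace X]
    [MeasurableSpace X] [BorelSpace X]
    (T : X → X) (hT : Continuous T) (d : ℝ) (hd : 0 < d) (M : ℕ) (hM : 0 < M)
    (Z : Set X) (α : Finset (Set X)) (hα : IsFinPartition α)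
    (U : Finset (Set X)) (hUm : ∀ A ∈ U, MeasurableSet A)
    (hUc : ⋃₀ (↑U : Set (Set X)) = univ)
    (hint : ∀ A ∈ U, {B ∈ (↑α : Set (Set X)) | (A ∩ B).Nonempty}.ncard ≤ M)
    (θ : Measure X) [IsProbabilityMeasure θ] (Zθ : Set X) (hZθ : Zθ ⊆ Z)
    (hZθpos : 0 < θ Zθ)
    (hsmall : ∀ x ∈ Zθ, ∃ c : ℝ, 0 < c ∧ ∀ n : ℕ, 0 < n →
      θ (atomAt (dynCov T α n) x) ≤ ENNReal.ofReal (c * Real.exp (-(n * d)))) :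
    ((d - Real.log M : ℝ) : EReal) ≤ hBU T U Z ∧ ((d : ℝ) : EReal) ≤ hBU T α Z := by
  refine ⟨aux_main_s13 T d M hM Z α hα.2.1 U hint θ Zθ hZθ hZθpos hsmall, ?_⟩
  have := aux_main_s13 T d 1 one_pos Z α hα.2.1 α ?_ θ Zθ hZθ hZθpos hsmall
  · simpa using this
  · intro A hA
    have hsub : {B ∈ (↑α : Set (Set X)) | (A ∩ B).Nonempty} ⊆ {A} := by
      rintro B ⟨hB, hAB⟩
      by_contra hne
      have hd := hα.2.2 hA hB (fun h => hne h.symm)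
      exact (Set.not_disjoint_iff_nonempty_inter.2 hAB) hd
    exact (Set.ncard_le_ncard hsub).trans (by simp)
end
end

section
/- (Uniform Mass Distribution Principle.) Let (X,T) be a general topological dynamical system, c > 0, d > 0, Z ⊆ X and α a finite Borel partition of X. If there exists a Borel probability measure θ on X such that θ(α_0^{n−1}(x)) ≥ c e^{−n d} for every x ∈ Z and every n ∈ ℕ, then h_α(T,Z) ≤ d. -/
open Filter Set Metric MeasureTheory
open scoped ENNReal Topology

noncomputable section

variable {X Y : Type*}

lemma umd_part {X : Type*} [MeasurableSpace X] (T : X → X) (hT : Measurable T)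
    (α : Finset (Set X)) (hα : IsFinPartition α) (n : ℕ) : IsFinPartition (dynCov T α n) := by
  classical
  induction n with
  | zero => simp [dynCov, IsFinPartition]
  | succ n ih =>
    obtain ⟨h1, h2, h3⟩ := hα
    obtain ⟨i1, i2, i3⟩ := ih
    have key : ∀ A, A ∈ dynCov T α (n+1) ↔
        ∃ B ∈ dynCov T α n, ∃ C ∈ α, B ∩ T^[n] ⁻¹' C = A := by
      intro A
      simp only [dynCov, covJoin, Finset.mem_image, Finset.mem_product, Prod.exists]
      constructor
      · rintro ⟨B, D, ⟨hB, C, hC, rfl⟩, rfl⟩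
        exact ⟨B, hB, C, hC, rfl⟩
      · rintro ⟨B, hB, C, hC, rfl⟩
        exact ⟨B, _, ⟨hB, C, hC, rfl⟩, rfl⟩
    refine ⟨?_, ?_, ?_⟩
    · intro A hA
      obtain ⟨B, hB, C, hC, rfl⟩ := (key A).1 hA
      exact (i1 B hB).inter ((hT.iterate n) (h1 C hC))
    · apply eq_univ_of_forall
      intro x
      obtain ⟨B, hB, hxB⟩ := mem_sUnion.1 (i2 ▸ mem_univ x)
      obtain ⟨C, hC, hxC⟩ := mem_sUnion.1 (h2 ▸ mem_univ (T^[n] x))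
      exact ⟨_, (key _).2 ⟨B, hB, C, hC, rfl⟩, hxB, hxC⟩
    · intro A hA A' hA' hne
      obtain ⟨B, hB, C, hC, rfl⟩ := (key A).1 hA
      obtain ⟨B', hB', C', hC', rfl⟩ := (key A').1 hA'
      rw [Set.disjoint_left]
      rintro x ⟨hx1, hx2⟩ ⟨hx3, hx4⟩
      apply hne
      have e1 : B = B' := by
        by_contra h
        exact Set.disjoint_left.1 (i3 hB hB' h) hx1 hx3
      have e2 : C = C' := by
        by_contra h
        exact Set.disjoint_left.1 (h3 hC hC' h) hx2 hx4
      rw [e1, e2]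

lemma umd_card {X : Type*} [MeasurableSpace X] (θ : Measure X) [IsProbabilityMeasure θ]
    (P : Finset (Set X)) (hP : IsFinPartition P) (Z : Set X) (r : ℝ) (hr : 0 < r)
    (h : ∀ x ∈ Z, ENNReal.ofReal r ≤ θ (atomAt P x)) :
    covCard P Z ≤ ENNReal.ofReal r⁻¹ := by
  classical
  obtain ⟨h1, h2, h3⟩ := hP
  set V := P.filter (fun A => (A ∩ Z).Nonempty) with hV
  have hVP : V ⊆ P := Finset.filter_subset _ _
  have hcov : Z ⊆ ⋃₀ (↑V : Set (Set X)) := by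
    intro x hx
    obtain ⟨B, hB, hxB⟩ := mem_sUnion.1 (h2 ▸ mem_univ x)
    exact ⟨B, by simpa [hV] using ⟨hB, x, hxB, hx⟩, hxB⟩
  refine (iInf₂_le V ⟨hVP, hcov⟩).trans ?_
  have hbd : ∀ A ∈ V, ENNReal.ofReal r ≤ θ A := by
    intro A hA
    obtain ⟨hAP, x, hxA, hxZ⟩ := Finset.mem_filter.1 hA
    refine (h x hxZ).trans (measure_mono ?_)
    rintro y ⟨B, ⟨hB, hxB⟩, hyB⟩
    have : B = A := by
      by_contra hne
      exact Set.disjoint_left.1 (h3 hB hAP hne) hxB hxA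
    exact this ▸ hyB
  have hsum : (V.card : ℝ≥0∞) * ENNReal.ofReal r ≤ 1 := by
    calc (V.card : ℝ≥0∞) * ENNReal.ofReal r = ∑ A ∈ V, ENNReal.ofReal r := by simp
      _ ≤ ∑ A ∈ V, θ A := Finset.sum_le_sum hbd
      _ = θ (⋃ A ∈ V, A) := (measure_biUnion_finset
          (fun A hA B hB hne => h3 (hVP hA) (hVP hB) hne) (fun A hA => h1 A (hVP hA))).symm
      _ ≤ 1 := prob_le_one
  rw [ENNReal.ofReal_inv_of_pos hr]
  exact ENNReal.le_inv_iff_mul_le.2 hsum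

/-- Uniform Mass Distribution Principle. -/
theorem uniform_mass_distribution {X : Type*} [MetricSpace X] [CompactSpace X]
    [MeasurableSpace X] [BorelSpace X]
    (T : X → X) (hT : Continuous T) (c d : ℝ) (hc : 0 < c) (hd : 0 < d)
    (Z : Set X) (α : Finset (Set X)) (hα : IsFinPartition α)
    (hbig : ∃ θ : Measure X, IsProbabilityMeasure θ ∧ ∀ x ∈ Z, ∀ n : ℕ, 0 < n →
      ENNReal.ofReal (c * Real.exp (-(n * d))) ≤ θ (atomAt (dynCov T α n) x)) :
    hCov T α Z ≤ ((d : ℝ) : EReal) := by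
  obtain ⟨θ, hθ, hb⟩ := hbig
  have hlim : Tendsto (fun n : ℕ => ((d - Real.log c / n : ℝ) : EReal)) atTop (𝓝 (d : EReal)) := by
    refine (continuous_coe_real_ereal.tendsto d).comp ?_
    have := tendsto_const_nhds (x := d) |>.sub (tendsto_const_div_atTop_nhds_zero_nat (Real.log c))
    simpa using this
  rw [← hlim.limsup_eq]
  refine limsup_le_limsup ?_
  filter_upwards [eventually_gt_atTop 0] with n hn
  have hn' : (0 : ℝ) < n := by exact_mod_cast hn
  have hr : 0 < c * Real.exp (-(n * d)) := by positivity
  have h := umd_card θ _ (umd_part T hT.measurable α hα n) Z _ hr (fun x hx => hb x hx n hn)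
  have hlog : ENNReal.log (covCard (dynCov T α n) Z) ≤ ((n * d - Real.log c : ℝ) : EReal) := by
    refine (ENNReal.log_monotone h).trans (le_of_eq ?_)
    rw [ENNReal.log_ofReal_of_pos (by positivity), Real.log_inv,
      Real.log_mul hc.ne' (Real.exp_pos _).ne', Real.log_exp]
    congr 1
    ring
  calc _ ≤ ((n * d - Real.log c : ℝ) : EReal) / (n : EReal) :=
        EReal.div_le_div_right_of_nonneg (by positivity) hlog
    _ = ((d - Real.log c / n : ℝ) : EReal) := by
        rw [← EReal.coe_natCast, ← EReal.coe_div]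
        congr 1
        field_simp
end
end

section
/- Let (X,T) be a general topological dynamical system, U a finite Borel cover of X, K ⊆ X and m ∈ ℕ. Then h^B_{U_0^{m−1}}(T^m, K) = m · h^B_U(T, K); consequently h^B(T^m, K) = m · h^B(T, K). -/
open Filter Set Metric MeasureTheory
open scoped ENNReal Topology

noncomputable section

variable {X Y : Type*}

theorem refines_dynCov_iff {X : Type*} (T : X → X) (U : Finset (Set X)) (E : Set X) (k : ℕ) :
    Refines E (dynCov T U k) ↔ ∀ i < k, Refines (T^[i] '' E) U := by
  classical
  induction k with
  | zero => simp [dynCov, Refines]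
  | succ k ih =>
    have h1 : Refines E (dynCov T U (k+1)) ↔
        Refines E (dynCov T U k) ∧ Refines (T^[k] '' E) U := by
      constructor
      · rintro ⟨A, hA, hE⟩
        simp only [dynCov, covJoin, Finset.mem_image, Finset.mem_product] at hA
        obtain ⟨⟨B, C⟩, ⟨hB, D, hD, rfl⟩, rfl⟩ := hA
        exact ⟨⟨B, hB, fun x hx => (hE hx).1⟩, ⟨D, hD, by
          rintro _ ⟨x, hx, rfl⟩; exact (hE hx).2⟩⟩
      · rintro ⟨⟨B, hB, hEB⟩, ⟨D, hD, hED⟩⟩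
        refine ⟨B ∩ T^[k] ⁻¹' D, ?_, fun x hx => ⟨hEB hx, hED ⟨x, hx, rfl⟩⟩⟩
        simp only [dynCov, covJoin, Finset.mem_image, Finset.mem_product]
        exact ⟨⟨B, T^[k] ⁻¹' D⟩, ⟨hB, D, hD, rfl⟩, rfl⟩
    rw [h1, ih]
    constructor
    · rintro ⟨h, h'⟩ i hi
      rcases Nat.lt_succ_iff_lt_or_eq.mp hi with h2 | rfl
      · exact h i h2
      · exact h'
    · intro h
      exact ⟨fun i hi => h i (by omega), h k (by omega)⟩

theorem refines_pow_iff {X : Type*} (T : X → X) (U : Finset (Set X)) (E : Set X)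
    (m : ℕ) (hm : 0 < m) (k : ℕ) :
    (∀ i < k, Refines ((T^[m])^[i] '' E) (dynCov T U m)) ↔
      ∀ i < m * k, Refines (T^[i] '' E) U := by
  have key : ∀ i j : ℕ, T^[j] '' ((T^[m])^[i] '' E) = T^[m * i + j] '' E := by
    intro i j
    rw [← image_comp, ← Function.iterate_mul, ← Function.iterate_add, Nat.add_comm]
  simp only [refines_dynCov_iff, key]
  constructor
  · intro h i hi
    have := h (i / m) (Nat.div_lt_of_lt_mul hi) (i % m) (Nat.mod_lt _ hm)
    rwa [Nat.div_add_mod] at this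
  · intro h i hi j hj
    apply h
    calc m * i + j < m * i + m := by omega
      _ = m * (i + 1) := by ring
      _ ≤ m * k := Nat.mul_le_mul_left _ hi

theorem all_or_max (P : ℕ → Prop) (h0 : P 0) (ha : ∀ i j, i ≤ j → P j → P i) :
    (∀ j, P j) ∨ ∃ N, ∀ j, P j ↔ j ≤ N := by
  classical
  by_cases h : ∀ j, P j
  · exact Or.inl h
  · right
    push Not at h
    have hs := Nat.find_spec h
    have hmin := fun j => Nat.find_min h (m := j)
    generalize Nat.find h = M at hs hmin
    have hM : M ≠ 0 := by rintro rfl; exact hs h0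
    refine ⟨M - 1, fun j => ⟨fun hj => ?_, fun hj => ?_⟩⟩
    · by_contra hc
      exact hs (ha M j (by omega) hj)
    · by_contra hc
      exact hmin j (by omega) hc

theorem iSup_all (P : ℕ → Prop) (h : ∀ j, P j) : (⨆ (j : ℕ) (_ : P j), (j : ℕ∞)) = ⊤ := by
  simp only [h, iSup_pos]
  exact ENat.iSup_natCast

theorem iSup_max (P : ℕ → Prop) (N : ℕ) (h : ∀ j, P j ↔ j ≤ N) :
    (⨆ (j : ℕ) (_ : P j), (j : ℕ∞)) = N := by
  apply le_antisymm
  · exact iSup₂_le fun j hj => by exact_mod_cast (h j).1 hj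
  · exact le_iSup₂_of_le N ((h N).2 le_rfl) le_rfl

theorem nTU_pow {X : Type*} (T : X → X) (U : Finset (Set X)) (E : Set X)
    (m : ℕ) (hm : 0 < m) :
    (nTU T U E = ⊤ ∧ nTU (T^[m]) (dynCov T U m) E = ⊤) ∨
    ∃ N : ℕ, nTU T U E = N ∧ nTU (T^[m]) (dynCov T U m) E = ((N / m : ℕ) : ℕ∞) := by
  unfold nTU
  simp only [refines_pow_iff T U E m hm]
  rcases all_or_max (fun j => ∀ i < j, Refines (T^[i] '' E) U) (by simp)
    (fun i j hij h l hl => h l (by omega)) with h | ⟨N, h⟩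
  · exact Or.inl ⟨iSup_all _ h, iSup_all _ fun j => h (m * j)⟩
  · refine Or.inr ⟨N, iSup_max _ N h, iSup_max _ _ fun j => ?_⟩
    rw [h (m * j), Nat.le_div_iff_mul_le hm, Nat.mul_comm]

theorem expWeight_coe (l : ℝ) (n : ℕ) :
    expWeight l n = ENNReal.ofReal (Real.exp (-(l * n))) := by
  simp [expWeight]

theorem expWeight_pow {X : Type*} (T : X → X) (U : Finset (Set X)) (E : Set X)
    (m : ℕ) (hm : 0 < m) (l : ℝ) :
    expWeight (m * l) (nTU (T^[m]) (dynCov T U m) E) ≤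
      ENNReal.ofReal (Real.exp (|l| * m)) * expWeight l (nTU T U E) ∧
    expWeight l (nTU T U E) ≤ ENNReal.ofReal (Real.exp (|l| * m)) *
      expWeight (m * l) (nTU (T^[m]) (dynCov T U m) E) := by
  have hm' : (0 : ℝ) < m := by exact_mod_cast hm
  have h1 : (1 : ℝ≥0∞) ≤ ENNReal.ofReal (Real.exp (|l| * m)) := by
    rw [ENNReal.one_le_ofReal]
    exact Real.one_le_exp (by positivity)
  rcases nTU_pow T U E m hm with ⟨ha, hb⟩ | ⟨N, ha, hb⟩
  · have : expWeight (m * l) ⊤ = expWeight l ⊤ := by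
      simp [expWeight, hm', hm'.ne']
    rw [ha, hb, this]
    exact ⟨le_mul_of_one_le_left (zero_le) h1, le_mul_of_one_le_left (zero_le) h1⟩
  · rw [ha, hb, expWeight_coe, expWeight_coe, ← ENNReal.ofReal_mul (Real.exp_pos _).le,
      ← ENNReal.ofReal_mul (Real.exp_pos _).le, ← Real.exp_add, ← Real.exp_add]
    have e : (m : ℝ) * ((N / m : ℕ) : ℝ) + ((N % m : ℕ) : ℝ) = N := by
      exact_mod_cast Nat.div_add_mod N m
    have r0 : (0 : ℝ) ≤ ((N % m : ℕ) : ℝ) := by positivity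
    have r1 : ((N % m : ℕ) : ℝ) ≤ m := by exact_mod_cast (Nat.mod_lt _ hm).le
    generalize ((N % m : ℕ) : ℝ) = r at *
    generalize ((N / m : ℕ) : ℝ) = q at *
    have b1 : |l * r| ≤ |l| * m := by
      rw [abs_mul, abs_of_nonneg r0]
      exact mul_le_mul_of_nonneg_left r1 (abs_nonneg _)
    have b2 := abs_le.1 b1
    rw [← e]
    constructor
    · apply ENNReal.ofReal_le_ofReal
      apply Real.exp_le_exp.2
      nlinarith
    · apply ENNReal.ofReal_le_ofReal
      apply Real.exp_le_exp.2
      nlinarith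

theorem mTU_le_mul {X : Type*} (T T' : X → X) (U U' : Finset (Set X)) (K : Set X) (l l' : ℝ)
    (k k' : ℕ) (C : ℝ≥0∞) (h0 : C ≠ 0) (ht : C ≠ ⊤)
    (hr : ∀ E, Refines E (dynCov T U k) → Refines E (dynCov T' U' k'))
    (hw : ∀ E, expWeight l' (nTU T' U' E) ≤ C * expWeight l (nTU T U E)) :
    mTU T' U' K l' k' ≤ C * mTU T U K l k := by
  unfold mTU
  rw [ENNReal.mul_iInf_of_ne h0 ht]
  refine le_iInf fun F => ?_
  rw [ENNReal.mul_iInf_of_ne h0 ht]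
  refine le_iInf fun hF => ?_
  refine iInf₂_le_of_le F ⟨hF.1, hF.2.1, fun E hE => hr E (hF.2.2 E hE)⟩ ?_
  rw [← ENNReal.tsum_mul_left]
  exact ENNReal.tsum_le_tsum fun E => hw E

theorem mTUlim_eq_zero {X : Type*} (T : X → X) (U : Finset (Set X)) (K : Set X) (l : ℝ) :
    mTUlim T U K l = 0 ↔ ∀ k, mTU T U K l k = 0 := by
  simp [mTUlim]

theorem mTUlim_pow {X : Type*} (T : X → X) (U : Finset (Set X)) (K : Set X)
    (m : ℕ) (hm : 0 < m) (l : ℝ) :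
    mTUlim (T^[m]) (dynCov T U m) K (m * l) = 0 ↔ mTUlim T U K l = 0 := by
  rw [mTUlim_eq_zero, mTUlim_eq_zero]
  have h0 : ENNReal.ofReal (Real.exp (|l| * m)) ≠ 0 := by simp [Real.exp_pos]
  constructor
  · intro h k
    have := mTU_le_mul (T^[m]) T (dynCov T U m) U K (m * l) l k k _ h0 ENNReal.ofReal_ne_top
      (fun E hE => by
        rw [refines_dynCov_iff, refines_pow_iff T U E m hm] at hE
        rw [refines_dynCov_iff]
        exact fun i hi => hE i (lt_of_lt_of_le hi (Nat.le_mul_of_pos_left k hm)))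
      (fun E => (expWeight_pow T U E m hm l).2)
    rw [h k, mul_zero] at this
    exact le_antisymm this (zero_le)
  · intro h k
    have := mTU_le_mul T (T^[m]) U (dynCov T U m) K l (m * l) (m * k) k _ h0
      ENNReal.ofReal_ne_top
      (fun E hE => by
        rw [refines_dynCov_iff] at hE
        rw [refines_dynCov_iff, refines_pow_iff T U E m hm]
        exact hE)
      (fun E => (expWeight_pow T U E m hm l).1)
    rw [h, mul_zero] at this
    exact le_antisymm this (zero_le)

theorem hBU_pow {X : Type*} (T : X → X) (U : Finset (Set X)) (K : Set X)
    (m : ℕ) (hm : 0 < m) :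
    hBU (T^[m]) (dynCov T U m) K = (m : EReal) * hBU T U K := by
  have hm' : (0 : ℝ) < m := by exact_mod_cast hm
  have hmE : (0 : EReal) < m := by exact_mod_cast hm
  have hmt : (m : EReal) ≠ ⊤ := EReal.natCast_ne_top m
  apply le_antisymm
  · rw [← EReal.div_le_iff_le_mul hmE hmt]
    refine le_iInf₂ fun l hl => ?_
    rw [EReal.div_le_iff_le_mul hmE hmt]
    refine iInf₂_le_of_le (m * l) ((mTUlim_pow T U K m hm l).2 hl) ?_
    rw [EReal.coe_mul]
    exact le_rfl
  · refine le_iInf₂ fun l hl => ?_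
    have e : l = m * (l / m) := by field_simp
    rw [e] at hl ⊢
    rw [EReal.coe_mul]
    exact mul_le_mul_of_nonneg_left (iInf₂_le (l / m) ((mTUlim_pow T U K m hm _).1 hl)) hmE.le

theorem expWeight_anti (l : ℝ) (hl : 0 ≤ l) (a b : ℕ∞) (h : a ≤ b) :
    expWeight l b ≤ expWeight l a := by
  rcases eq_or_ne b ⊤ with rfl | hb
  · rcases hl.lt_or_eq with h' | rfl
    · simp [expWeight, h']
    · simp [expWeight]
  · lift b to ℕ using hb
    lift a to ℕ using (ne_top_of_le_ne_top (ENat.natCast_ne_top b) h)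
    rw [expWeight_coe, expWeight_coe]
    have h' : (a : ℝ) ≤ b := by exact_mod_cast h
    apply ENNReal.ofReal_le_ofReal
    apply Real.exp_le_exp.2
    nlinarith

theorem one_le_expWeight (l : ℝ) (hl : l < 0) (a : ℕ∞) : 1 ≤ expWeight l a := by
  rcases eq_or_ne a ⊤ with rfl | hb
  · simp [expWeight, hl.le.not_gt, hl.ne]
  · lift a to ℕ using hb
    rw [expWeight_coe, ENNReal.one_le_ofReal]
    apply Real.one_le_exp
    have : (0 : ℝ) ≤ a := by positivity
    nlinarith

theorem hBU_mono {X : Type*} (T : X → X) (U V : Finset (Set X)) (K : Set X)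
    (h : ∀ E, Refines E U → Refines E V) : hBU T V K ≤ hBU T U K := by
  refine le_iInf₂ fun l hl => iInf₂_le l ?_
  rw [mTUlim_eq_zero] at hl ⊢
  intro k
  rcases le_or_gt 0 l with h0 | h0
  · have := mTU_le_mul T T U V K l l k k 1 one_ne_zero ENNReal.one_ne_top
      (fun E hE => by
        rw [refines_dynCov_iff] at hE ⊢
        exact fun i hi => h _ (hE i hi))
      (fun E => by
        rw [one_mul]
        apply expWeight_anti l h0
        exact iSup₂_le fun j hj => le_iSup₂_of_le j (fun i hi => h _ (hj i hi)) le_rfl)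
    rw [hl, mul_zero] at this
    exact le_antisymm this (zero_le)
  · rcases K.eq_empty_or_nonempty with rfl | ⟨x, hx⟩
    · refine le_antisymm ?_ (zero_le)
      exact iInf₂_le_of_le ∅ ⟨countable_empty, by simp, by simp⟩ (by simp)
    · exfalso
      have : (1 : ℝ≥0∞) ≤ mTU T U K l k := by
        refine le_iInf₂ fun F hF => ?_
        obtain ⟨E, hE, -⟩ := hF.2.1 hx
        exact (one_le_expWeight l h0 _).trans
          (ENNReal.le_tsum (f := fun E : F => expWeight l (nTU T U (E : Set X))) ⟨E, hE⟩)
      rw [hl] at this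
      exact absurd this (by simp)

theorem dynCov_open {X : Type*} [TopologicalSpace X] (T : X → X) (hT : Continuous T)
    (U : Finset (Set X)) (hU : ∀ A ∈ U, IsOpen A) (n : ℕ) : ∀ A ∈ dynCov T U n, IsOpen A := by
  classical
  induction n with
  | zero => simp [dynCov]
  | succ n ih =>
    intro A hA
    simp only [dynCov, covJoin, Finset.mem_image, Finset.mem_product] at hA
    obtain ⟨⟨B, C⟩, ⟨hB, D, hD, rfl⟩, rfl⟩ := hA
    exact (ih B hB).inter ((hU D hD).preimage (hT.iterate n))

theorem dynCov_cover {X : Type*} (T : X → X) (U : Finset (Set X))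
    (hU : ⋃₀ (↑U : Set (Set X)) = univ) (n : ℕ) :
    ⋃₀ (↑(dynCov T U n) : Set (Set X)) = univ := by
  rw [eq_univ_iff_forall]
  intro x
  have : Refines {x} (dynCov T U n) := by
    rw [refines_dynCov_iff]
    intro i _
    obtain ⟨A, hA, hx⟩ := (eq_univ_iff_forall.1 hU) (T^[i] x)
    exact ⟨A, hA, by simpa using hx⟩
  obtain ⟨A, hA, hx⟩ := this
  exact ⟨A, hA, hx rfl⟩

/-- Power rule for dimensional entropy:
`h^B_{U_0^{m-1}}(T^m,K) = m · h^B_U(T,K)`, and consequently `h^B(T^m,K) = m · h^B(T,K)`. -/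
theorem dimensional_entropy_power {X : Type*} [MetricSpace X] [CompactSpace X]
    [MeasurableSpace X] [BorelSpace X]
    (T : X → X) (hT : Continuous T) (U : Finset (Set X))
    (hUm : ∀ A ∈ U, MeasurableSet A) (hUc : ⋃₀ (↑U : Set (Set X)) = univ)
    (K : Set X) (m : ℕ) (hm : 0 < m) :
    hBU (T^[m]) (dynCov T U m) K = (m : EReal) * hBU T U K ∧
    hB (T^[m]) K = (m : EReal) * hB T K := by
  have hmE : (0 : EReal) < m := by exact_mod_cast hm
  have hmt : (m : EReal) ≠ ⊤ := EReal.natCast_ne_top m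
  refine ⟨hBU_pow T U K m hm, le_antisymm ?_ ?_⟩
  · refine iSup₂_le fun V hV => ?_
    calc hBU (T^[m]) V K ≤ hBU (T^[m]) (dynCov T V m) K := by
          apply hBU_mono
          intro E hE
          rw [refines_dynCov_iff] at hE
          simpa using hE 0 hm
      _ = (m : EReal) * hBU T V K := hBU_pow T V K m hm
      _ ≤ (m : EReal) * hB T K :=
          mul_le_mul_of_nonneg_left (le_iSup₂_of_le V hV le_rfl) hmE.le
  · rw [mul_comm, ← EReal.le_div_iff_mul_le hmE hmt]
    refine iSup₂_le fun V hV => ?_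
    rw [EReal.le_div_iff_mul_le hmE hmt, mul_comm, ← hBU_pow T V K m hm]
    exact le_iSup₂_of_le (dynCov T V m)
      ⟨dynCov_open T hT V hV.1 m, dynCov_cover T V hV.2 m⟩ le_rfl
end
end

section
/- Let (X,T) be a general topological dynamical system and U a finite open cover of X. Then: (1) h_U(T,K) = h_U(T,TK) for every K ⊆ X, and the entropy hyper-function H : 2^X → [0, h_top(T,X)], H(K) = h(T,K), satisfies H(T̂K) = H(K) where T̂(K) = TK; (2) the function K ↦ h_U(T,K) is Borel measurable on the hyperspace 2^X equipped with the Hausdorff metric; (3) the entropy hyper-function H is Borel measurable on 2^X. -/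
open Filter Set Metric MeasureTheory
open scoped ENNReal Topology

noncomputable section

variable {X Y : Type*}

lemma mem_dynCov_iff (T : X → X) (U : Finset (Set X)) (n : ℕ) (S : Set X) :
    S ∈ dynCov T U n ↔
      ∃ f : ℕ → Set X, (∀ i < n, f i ∈ U) ∧ S = {x | ∀ i < n, T^[i] x ∈ f i} := by
  classical
  induction n generalizing S with
  | zero =>
    simp [dynCov]
  | succ n ih =>
    simp only [dynCov, covJoin, Finset.mem_image, Finset.mem_product, Prod.exists]
    constructor
    · rintro ⟨S', B, ⟨hS', A, hA, rfl⟩, rfl⟩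
      obtain ⟨f, hf, rfl⟩ := (ih S').1 hS'
      refine ⟨fun i => if i < n then f i else A, ?_, ?_⟩
      · intro i _
        by_cases h : i < n
        · simp [h, hf i h]
        · simp [h, hA]
      · ext x
        simp only [mem_inter_iff, mem_ofPred_eq, mem_preimage]
        constructor
        · rintro ⟨h1, h2⟩ i hi
          by_cases h : i < n
          · simpa [h] using h1 i h
          · have : i = n := by omega
            subst this
            simpa using h2
        · intro h
          refine ⟨fun i hi => ?_, ?_⟩
          · simpa [hi] using h i (by omega)
          · simpa using h n (by omega)
    · rintro ⟨f, hf, rfl⟩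
      refine ⟨{x | ∀ i < n, T^[i] x ∈ f i}, T^[n] ⁻¹' f n,
        ⟨(ih _).2 ⟨f, fun i hi => hf i (by omega), rfl⟩, f n, hf n (by omega), rfl⟩, ?_⟩
      ext x
      simp only [mem_inter_iff, mem_ofPred_eq, mem_preimage]
      constructor
      · rintro ⟨h1, h2⟩ i hi
        by_cases h : i < n
        · exact h1 i h
        · have : i = n := by omega
          subst this
          exact h2
      · intro h
        exact ⟨fun i hi => h i (by omega), h n (by omega)⟩

lemma covCard_le_mul {ι : Type*} (W W' : Finset (Set X)) (K K' : Set X) (I : Finset ι)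
    (hI : I.Nonempty)
    (φ : Set X → ι → Set X) (h1 : ∀ S ∈ W', ∀ a ∈ I, φ S a ∈ W)
    (h2 : ∀ x ∈ K, ∃ x' ∈ K', ∀ S ∈ W', x' ∈ S → ∃ a ∈ I, x ∈ φ S a) :
    covCard W K ≤ (I.card : ℝ≥0∞) * covCard W' K' := by
  classical
  have hne : (I.card : ℝ≥0∞) ≠ ⊤ := ENNReal.natCast_ne_top _
  have key : ∀ V' : Finset (Set X), V' ⊆ W' → K' ⊆ ⋃₀ (↑V' : Set (Set X)) →
      covCard W K ≤ (I.card : ℝ≥0∞) * V'.card := by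
    intro V' hV' hK'
    have h3 : covCard W K ≤ (((V' ×ˢ I).image fun p => φ p.1 p.2).card : ℝ≥0∞) := by
      refine iInf₂_le _ ⟨?_, ?_⟩
      · intro S hS
        simp only [Finset.mem_image, Finset.mem_product, Prod.exists] at hS
        obtain ⟨S', a, ⟨hS', ha⟩, rfl⟩ := hS
        exact h1 _ (hV' hS') _ ha
      · intro x hx
        obtain ⟨x', hx', h⟩ := h2 x hx
        obtain ⟨S, hS, hxS⟩ := hK' hx'
        obtain ⟨a, ha, hxa⟩ := h S (hV' hS) hxS
        refine ⟨φ S a, ?_, hxa⟩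
        simp only [Finset.coe_image, mem_image, Finset.mem_coe, Finset.mem_product, Prod.exists]
        exact ⟨S, a, ⟨hS, ha⟩, rfl⟩
    refine h3.trans ?_
    have h4 : ((V' ×ˢ I).image fun p => φ p.1 p.2).card ≤ I.card * V'.card := by
      refine Finset.card_image_le.trans ?_
      rw [Finset.card_product, mul_comm]
    exact_mod_cast h4
  have h0 : (I.card : ℝ≥0∞) ≠ 0 := by
    simpa using hI.ne_empty
  rw [mul_comm, ← ENNReal.div_le_iff_le_mul (Or.inl h0) (Or.inl hne)]
  refine le_iInf₂ fun V' hV' => ?_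
  rw [ENNReal.div_le_iff_le_mul (Or.inl h0) (Or.inl hne), mul_comm]
  exact key V' hV'.1 hV'.2

lemma hCov_le_of_mul (T : X → X) (U U' : Finset (Set X)) (K K' : Set X) (c : ℕ)
    (h : ∀ n, covCard (dynCov T U n) K ≤ (c : ℝ≥0∞) * covCard (dynCov T U' n) K') :
    hCov T U K ≤ hCov T U' K' :=
  ExpGrowth.expGrowthSup_le_of_eventually_le (b := (c : ℝ≥0∞)) (ENNReal.natCast_ne_top _)
    (Eventually.of_forall h)

lemma hCov_image (T : X → X) (U : Finset (Set X)) (hUc : ⋃₀ (↑U : Set (Set X)) = univ)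
    (K : Set X) : hCov T U (T '' K) = hCov T U K := by
  classical
  rcases K.eq_empty_or_nonempty with rfl | ⟨x0, hx0⟩
  · simp
  have hcov : ∀ x : X, ∃ A ∈ U, x ∈ A := fun x => by
    have : x ∈ ⋃₀ (↑U : Set (Set X)) := hUc ▸ mem_univ x
    exact this
  have hU : U.Nonempty := let ⟨A, hA, _⟩ := hcov x0; ⟨A, hA⟩
  apply le_antisymm
  · refine hCov_le_of_mul T U U _ _ U.card fun n => ?_
    have hch : ∀ S : Set X, ∃ f : ℕ → Set X, S ∈ dynCov T U n →
        (∀ i < n, f i ∈ U) ∧ S = {x | ∀ i < n, T^[i] x ∈ f i} := fun S => by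
      by_cases hS : S ∈ dynCov T U n
      · obtain ⟨f, hf⟩ := (mem_dynCov_iff T U n S).1 hS
        exact ⟨f, fun _ => hf⟩
      · exact ⟨fun _ => ∅, fun h => absurd h hS⟩
    choose F hF using hch
    refine covCard_le_mul _ _ _ _ U hU
      (fun S A => {x | ∀ i < n, T^[i] x ∈ (if i + 1 < n then F S (i + 1) else A)}) ?_ ?_
    · intro S hS A hA
      refine (mem_dynCov_iff T U n _).2
        ⟨fun i => if i + 1 < n then F S (i + 1) else A, fun i hi => ?_, rfl⟩
      dsimp only
      split_ifs with h
      · exact (hF S hS).1 _ h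
      · exact hA
    · rintro _ ⟨x, hx, rfl⟩
      refine ⟨x, hx, fun S hS hxS => ?_⟩
      obtain ⟨A, hA, hxA⟩ := hcov (T^[n] x)
      refine ⟨A, hA, fun i hi => ?_⟩
      rw [(hF S hS).2] at hxS
      rw [← Function.iterate_succ_apply]
      split_ifs with h
      · exact hxS _ h
      · have : n = i + 1 := by omega
        rw [this] at hxA
        exact hxA
  · refine hCov_le_of_mul T U U _ _ U.card fun n => ?_
    have hch : ∀ S : Set X, ∃ f : ℕ → Set X, S ∈ dynCov T U n →
        (∀ i < n, f i ∈ U) ∧ S = {x | ∀ i < n, T^[i] x ∈ f i} := fun S => by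
      by_cases hS : S ∈ dynCov T U n
      · obtain ⟨f, hf⟩ := (mem_dynCov_iff T U n S).1 hS
        exact ⟨f, fun _ => hf⟩
      · exact ⟨fun _ => ∅, fun h => absurd h hS⟩
    choose F hF using hch
    refine covCard_le_mul _ _ _ _ U hU
      (fun S A => {x | ∀ i < n, T^[i] x ∈ (if i = 0 then A else F S (i - 1))}) ?_ ?_
    · intro S hS A hA
      refine (mem_dynCov_iff T U n _).2
        ⟨fun i => if i = 0 then A else F S (i - 1), fun i hi => ?_, rfl⟩
      dsimp only
      split_ifs with h
      · exact hA
      · exact (hF S hS).1 _ (by omega)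
    · intro x hx
      refine ⟨T x, ⟨x, hx, rfl⟩, fun S hS hxS => ?_⟩
      obtain ⟨A, hA, hxA⟩ := hcov x
      refine ⟨A, hA, fun i hi => ?_⟩
      rw [(hF S hS).2] at hxS
      split_ifs with h
      · subst h
        exact hxA
      · have h1 := hxS (i - 1) (by omega)
        rw [← Function.iterate_succ_apply] at h1
        have : (i - 1).succ = i := by omega
        rwa [this] at h1

lemma hCov_le_of_refines (T : X → X) (U U' : Finset (Set X))
    (h : ∀ B ∈ U', ∃ A ∈ U, B ⊆ A) (K : Set X) : hCov T U K ≤ hCov T U' K := by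
  classical
  refine hCov_le_of_mul T U U' _ _ 1 fun n => ?_
  have hch : ∀ S : Set X, ∃ S' : Set X, S ∈ dynCov T U' n → S' ∈ dynCov T U n ∧ S ⊆ S' := by
    intro S
    by_cases hS : S ∈ dynCov T U' n
    · obtain ⟨f, hf, rfl⟩ := (mem_dynCov_iff T U' n S).1 hS
      choose! ρ hρ hρ' using h
      exact ⟨{x | ∀ i < n, T^[i] x ∈ ρ (f i)}, fun _ =>
        ⟨(mem_dynCov_iff T U n _).2 ⟨fun i => ρ (f i), fun i hi => hρ _ (hf i hi), rfl⟩,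
          fun x hx i hi => hρ' _ (hf i hi) (hx i hi)⟩⟩
    · exact ⟨∅, fun h => absurd h hS⟩
  choose φ hφ using hch
  have := covCard_le_mul (dynCov T U n) (dynCov T U' n) K K (Finset.univ : Finset Unit)
    Finset.univ_nonempty (fun S _ => φ S) (fun S hS _ _ => (hφ S hS).1)
    (fun x hx => ⟨x, hx, fun S hS hxS => ⟨(), Finset.mem_univ _, (hφ S hS).2 hxS⟩⟩)
  simpa using this

lemma isOpen_of_mem_dynCov [TopologicalSpace X] (T : X → X) (hT : Continuous T)
    (U : Finset (Set X)) (hUo : ∀ A ∈ U, IsOpen A) (n : ℕ) : ∀ S ∈ dynCov T U n, IsOpen S := by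
  intro S hS
  obtain ⟨f, hf, rfl⟩ := (mem_dynCov_iff T U n S).1 hS
  have : {x | ∀ i < n, T^[i] x ∈ f i} = ⋂ i ∈ Finset.range n, T^[i] ⁻¹' f i := by
    ext x; simp
  rw [this]
  exact isOpen_biInter_finset fun i hi =>
    (hUo _ (hf i (Finset.mem_range.1 hi))).preimage (hT.iterate i)

lemma measurable_hCov [MetricSpace X] (T : X → X) (hT : Continuous T)
    (U : Finset (Set X)) (hUo : ∀ A ∈ U, IsOpen A) :
    @Measurable (TopologicalSpace.NonemptyCompacts X) EReal
      (borel (TopologicalSpace.NonemptyCompacts X)) _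
      fun K : TopologicalSpace.NonemptyCompacts X => hCov T U (K : Set X) := by
  letI : MeasurableSpace (TopologicalSpace.NonemptyCompacts X) := borel _
  haveI : BorelSpace (TopologicalSpace.NonemptyCompacts X) := ⟨rfl⟩
  unfold hCov
  refine Measurable.limsup fun n => ?_
  have h1 : Measurable fun K : TopologicalSpace.NonemptyCompacts X =>
      covCard (dynCov T U n) (K : Set X) := by
    refine measurable_of_Iio fun c => IsOpen.measurableSet ?_
    have : (fun K : TopologicalSpace.NonemptyCompacts X =>
        covCard (dynCov T U n) (K : Set X)) ⁻¹' Iio c =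
        ⋃ V : {V : Finset (Set X) // V ⊆ dynCov T U n ∧ (V.card : ℝ≥0∞) < c},
          {K : TopologicalSpace.NonemptyCompacts X |
            (K : Set X) ⊆ ⋃₀ (↑V.1 : Set (Set X))} := by
      ext K
      simp only [mem_preimage, mem_Iio, covCard, iInf_lt_iff, mem_iUnion, mem_ofPred_eq,
        Subtype.exists]
      constructor
      · rintro ⟨V, ⟨a, b⟩, c⟩
        exact ⟨V, ⟨a, c⟩, b⟩
      · rintro ⟨V, ⟨a, c⟩, b⟩
        exact ⟨V, ⟨a, b⟩, c⟩
    rw [this]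
    refine isOpen_iUnion fun V => TopologicalSpace.NonemptyCompacts.isOpen_subsets_of_isOpen ?_
    exact isOpen_sUnion fun S hS => isOpen_of_mem_dynCov T hT U hUo n S (V.2.1 hS)
  have h2 : Monotone fun x : ℝ≥0∞ => ENNReal.log x / (n : EReal) := fun x y hxy =>
    EReal.monotone_div_right_of_nonneg n.cast_nonneg' (ENNReal.log_monotone hxy)
  exact h2.measurable.comp h1

lemma exists_fine_cover [MetricSpace X] [CompactSpace X] (k : ℕ) :
    ∃ W : Finset (Set X), ((∀ A ∈ W, IsOpen A) ∧ ⋃₀ (↑W : Set (Set X)) = univ) ∧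
      ∀ A ∈ W, ∃ x, A ⊆ ball x (1 / ((k : ℝ) + 1)) := by
  classical
  obtain ⟨t, -, ht, hc⟩ := finite_cover_balls_of_compact (isCompact_univ (X := X))
    (e := 1 / ((k : ℝ) + 1)) (by positivity)
  refine ⟨ht.toFinset.image fun x => ball x (1 / ((k : ℝ) + 1)), ⟨?_, ?_⟩, ?_⟩
  · intro A hA
    obtain ⟨x, -, rfl⟩ := Finset.mem_image.1 hA
    exact isOpen_ball
  · refine eq_univ_of_forall fun x => ?_
    obtain ⟨y, hy, hxy⟩ := mem_iUnion₂.1 (hc (mem_univ x))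
    exact ⟨_, Finset.mem_coe.2 (Finset.mem_image.2 ⟨y, by simpa using hy, rfl⟩), hxy⟩
  · intro A hA
    obtain ⟨x, -, rfl⟩ := Finset.mem_image.1 hA
    exact ⟨x, Subset.rfl⟩

lemma measurable_hCovSup [MetricSpace X] [CompactSpace X] (T : X → X) (hT : Continuous T) :
    @Measurable (TopologicalSpace.NonemptyCompacts X) EReal
      (borel (TopologicalSpace.NonemptyCompacts X)) _
      fun K : TopologicalSpace.NonemptyCompacts X => hCovSup T (K : Set X) := by
  letI : MeasurableSpace (TopologicalSpace.NonemptyCompacts X) := borel _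
  choose W hW hW' using exists_fine_cover (X := X)
  have : (fun K : TopologicalSpace.NonemptyCompacts X => hCovSup T (K : Set X)) =
      fun K : TopologicalSpace.NonemptyCompacts X => ⨆ k : ℕ, hCov T (W k) (K : Set X) := by
    funext K
    apply le_antisymm
    · refine iSup₂_le fun U hU => ?_
      obtain ⟨δ, hδ, h⟩ := lebesgue_number_lemma_of_metric_sUnion (isCompact_univ (X := X))
        (c := (↑U : Set (Set X))) hU.1 hU.2.ge
      obtain ⟨k, hk⟩ := exists_nat_one_div_lt hδ
      refine le_iSup_of_le k (hCov_le_of_refines T U (W k) (fun B hB => ?_) K)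
      obtain ⟨x, hx⟩ := hW' k B hB
      obtain ⟨A, hA, hxA⟩ := h x (mem_univ x)
      exact ⟨A, hA, hx.trans ((ball_subset_ball hk.le).trans hxA)⟩
    · exact iSup_le fun k => le_iSup₂_of_le (W k) (hW k) le_rfl
  rw [this]
  exact Measurable.iSup fun k => measurable_hCov T hT (W k) (hW k).1

/-- Invariance and Borel measurability of the entropy hyper-function on
the hyperspace `2^X` of non-empty compact subsets (with the Hausdorff metric):
(1) `h_U(T,K) = h_U(T,TK)` and `H(T̂K) = H(K)`; (2) `K ↦ h_U(T,K)` is Borel measurable;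
(3) the entropy hyper-function `H(K) = h(T,K)` is Borel measurable. -/
theorem entropy_hyperfunction_measurable {X : Type*} [MetricSpace X] [CompactSpace X]
    (T : X → X) (hT : Continuous T) (U : Finset (Set X))
    (hUo : ∀ A ∈ U, IsOpen A) (hUc : ⋃₀ (↑U : Set (Set X)) = univ) :
    (∀ K : Set X, hCov T U (T '' K) = hCov T U K) ∧
    (∀ K : TopologicalSpace.NonemptyCompacts X,
      hCovSup T (T '' (K : Set X)) = hCovSup T (K : Set X)) ∧
    (@Measurable (TopologicalSpace.NonemptyCompacts X) EReal
      (borel (TopologicalSpace.NonemptyCompacts X)) _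
      fun K : TopologicalSpace.NonemptyCompacts X => hCov T U (K : Set X)) ∧
    (@Measurable (TopologicalSpace.NonemptyCompacts X) EReal
      (borel (TopologicalSpace.NonemptyCompacts X)) _
      fun K : TopologicalSpace.NonemptyCompacts X => hCovSup T (K : Set X)) := by
  exact ⟨hCov_image T U hUc,
    fun K => iSup_congr fun V => iSup_congr fun hV => hCov_image T V hV.2 K,
    measurable_hCov T hT U hUo, measurable_hCovSup T hT⟩
end
end
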